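/- arXiv:2106.15982 — 4 statements merged into one kernel-verified Lean document; each statement's English description precedes it below -/
import Mathlib

section
/- Let N ≥ 3, 1 < p < N, and q > p* := Np/(N−p). Then there exists a function u ∈ D^{1,p}(ℤ^N) with u(x) > 0 for every x ∈ ℤ^N satisfying Δ_p u(x) + u(x)^{q−1} = 0 for all x ∈ ℤ^N. -/
/-!
The solution is a multiple of an extremal for the inequality `‖u‖_q^q ≤ S E(u)^{q/p}` with best
constant `S`, where `E(u) = ‖u‖_{D^{1,p}}^p` (`energy`) and `‖u‖_q^q` is `mass q u`.

* **Sobolev inequality** (`sobolev`). For finitely supported `u`, `‖u‖_{p*}^{p*} ≤ C E(u)^{p*/p}`.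
  The case `p = 1` follows from the grid-lines (Loomis–Whitney) lemma for counting measure; apply
  it to `|u|^γ` with `γ = p(N-1)/(N-p)` and use Hölder. As `ℓ^{p*} ⊂ ℓ^q`, the constant `S` is
  finite.
* **Maximising sequence** (`exists_maximizing`). Replace `u_n` by `|u_n|`, normalise `E(u_n) ≤ 1`,
  and translate so that the maximum is attained at `0`. From
  `‖u_n‖_q^q ≤ u_n(0)^{q-p*} ‖u_n‖_{p*}^{p*}` and `q > p*`, the values `u_n(0)` stay away from `0`:
  this is where supercriticality excludes vanishing. A subsequence converges pointwise to some
  `w ≥ 0` with `w(0) > 0`, and `w ∈ D^{1,p}` by Fatou.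
* **Euler–Lagrange equation** (`euler_lagrange`). No strong convergence is needed. Changing the
  value of `u_n` at a single vertex `z` to `s` changes `‖u_n‖_q^q` and `E(u_n)` by expressions in
  finitely many values of `u_n`. Hence the optimal inequality for the perturbed functions passes to
  the limit, with equality at `s = w(z)`, and the vanishing of the derivative there is
  `2 S Δ_p w(z) + w(z)^{q-1} = 0`.
* **Positivity** (`pos_of_pLap`). At a zero of `w` the equation forces all neighbours to be zeros,
  so `w > 0` by connectedness. Since `p ≠ q`, rescaling `w` removes the factor `2 S`.
-/

open Filter Topology

noncomputable section

/-- The vertex set of the `N`-dimensional integer lattice graph. -/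
abbrev ZN (N : ℕ) := Fin N → ℤ

/-- Adjacency in the lattice graph `ℤ^N`: `x ∼ y` iff `Σ_k |x k - y k| = 1`. -/
def adj {N : ℕ} (x y : ZN N) : Prop := (∑ k, |x k - y k|) = 1

/-- `|∇u(x)|_p^p = Σ_{y∼x} |u(y)-u(x)|^p`. -/
def gradPow {N : ℕ} (p : ℝ) (u : ZN N → ℝ) (x : ZN N) : ℝ :=
  ∑' y : {y : ZN N // adj x y}, |u y.1 - u x| ^ p

/-- `‖u‖_{D^{1,p}}^p = Σ_x |∇u(x)|_p^p`. -/
def DSumPow {N : ℕ} (p : ℝ) (u : ZN N → ℝ) : ℝ := ∑' x, gradPow p u x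

/-- `‖u‖_{D^{1,p}}`. -/
def Dnorm {N : ℕ} (p : ℝ) (u : ZN N → ℝ) : ℝ := DSumPow p u ^ (1 / p)

/-- `‖u‖_q = (Σ_x |u(x)|^q)^{1/q}`. -/
def lpNorm {N : ℕ} (q : ℝ) (u : ZN N → ℝ) : ℝ := (∑' x, |u x| ^ q) ^ (1 / q)

/-- `u ∈ ℓ^q(ℤ^N)`. -/
def Memlp {N : ℕ} (q : ℝ) (u : ZN N → ℝ) : Prop := Summable fun x => |u x| ^ q

/-- `u ∈ D^{1,p}(ℤ^N)`, identified with `{u ∈ ℓ^{p*} : ‖u‖_{D^{1,p}} < ∞}`. -/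
def MemD {N : ℕ} (p pstar : ℝ) (u : ZN N → ℝ) : Prop :=
  Memlp pstar u ∧ Summable fun x => gradPow p u x

/-- The `p`-Laplacian `Δ_p u(x) = Σ_{y∼x} |u(y)-u(x)|^{p-2}(u(y)-u(x))` on `ℤ^N`. -/
def pLap {N : ℕ} (p : ℝ) (u : ZN N → ℝ) (x : ZN N) : ℝ :=
  ∑' y : {y : ZN N // adj x y}, |u y.1 - u x| ^ (p - 2) * (u y.1 - u x)

/-! ### Unit steps -/

/-- The finite set of the `2 N` unit steps `±e_k`, that is, the neighbours of the origin. -/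
def nb (N : ℕ) : Finset (ZN N) :=
  haveI := Classical.decPred (fun d : ZN N => adj 0 d)
  (Finset.Icc (-1) 1).filter (adj 0)

lemma mem_nb {N : ℕ} {d : ZN N} : d ∈ nb N ↔ adj 0 d := by
  classical
  simp only [nb, Finset.mem_filter, Finset.mem_Icc, and_iff_right_iff_imp]
  intro h
  have hk : ∀ k, |d k| ≤ 1 := by
    intro k
    have h' : (∑ k, |d k|) = 1 := by simpa [adj] using h
    rw [← h']
    exact Finset.single_le_sum (f := fun k => |d k|) (fun _ _ => abs_nonneg _) (Finset.mem_univ k)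
  exact ⟨fun k => (abs_le.1 (hk k)).1, fun k => (abs_le.1 (hk k)).2⟩

lemma neg_mem_nb {N : ℕ} {d : ZN N} (h : d ∈ nb N) : -d ∈ nb N := by
  rw [mem_nb] at *
  simpa [adj] using h

lemma ne_zero_of_mem_nb {N : ℕ} {d : ZN N} (h : d ∈ nb N) : d ≠ 0 := by
  rintro rfl
  rw [mem_nb] at h
  simp [adj] at h

lemma single_mem_nb {N : ℕ} (i : Fin N) : (Pi.single i 1 : ZN N) ∈ nb N := by
  rw [mem_nb, adj, Finset.sum_eq_single i]
  · simp
  · intro j _ hj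
    simp [hj]
  · simp

lemma tsum_adj {N : ℕ} (x : ZN N) (f : ZN N → ℝ) :
    ∑' y : {y : ZN N // adj x y}, f y.1 = ∑ d ∈ nb N, f (x + d) := by
  classical
  let e : {d : ZN N // d ∈ nb N} ≃ {y : ZN N // adj x y} :=
    (Equiv.addLeft x).subtypeEquiv (by
      intro d
      rw [mem_nb]
      simp [adj])
  rw [← e.tsum_eq (fun y : {y : ZN N // adj x y} => f y.1), tsum_fintype,
    ← Finset.sum_coe_sort (nb N)]
  rfl

lemma sum_nb_neg {N : ℕ} (f : ZN N → ℝ) : ∑ d ∈ nb N, f (-d) = ∑ d ∈ nb N, f d :=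
  Finset.sum_nbij' (fun d => -d) (fun d => -d) (fun _ h => neg_mem_nb h)
    (fun _ h => neg_mem_nb h) (by simp) (by simp) (by simp)

lemma sum_fin_tsum {N : ℕ} {f : ZN N → ZN N → ℝ} (h : ∀ d, (f d).support.Finite) :
    ∑ d ∈ nb N, ∑' x, f d x = ∑' x, ∑ d ∈ nb N, f d x :=
  (Summable.tsum_finsetSum (fun d _ => summable_of_hasFiniteSupport (h d))).symm

/-! ### The Gagliardo–Nirenberg–Sobolev inequality on the lattice -/

/-- A finitely supported function on `ℤ` is bounded by its total variation. -/
lemma enorm_le_tsum_diff (w : ℤ → ℝ) (hw : w.support.Finite) (a : ℤ) :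
    ‖w a‖ₑ ≤ ∑' t : ℤ, ‖w (t + 1) - w t‖ₑ := by
  obtain ⟨n, hn⟩ : ∃ n : ℕ, w (a + n) = 0 := by
    by_contra! h
    have hinj : Function.Injective (fun n : ℕ => a + (n : ℤ)) := fun m n h => by
      simpa using h
    exact Set.infinite_of_injective_forall_mem hinj (s := w.support) (fun n => h n) hw
  have h1 := edist_le_range_sum_edist (fun k : ℕ => w (a + k)) n
  simp only [hn, Nat.cast_zero, add_zero] at h1
  rw [edist_zero_right] at h1
  refine h1.trans (le_trans ?_ (ENNReal.tsum_comp_le_tsum_of_injective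
    (f := fun k : ℕ => a + (k : ℤ)) (fun m n h => by simpa using h)
    (fun t => ‖w (t + 1) - w t‖ₑ)))
  refine le_trans (le_of_eq ?_) (ENNReal.sum_le_tsum (Finset.range n))
  refine Finset.sum_congr rfl fun k _ => ?_
  rw [edist_comm, edist_eq_enorm_sub]
  push_cast
  rw [add_assoc]

lemma pi_count (N : ℕ) : MeasureTheory.Measure.pi
    (fun _ : Fin N => (MeasureTheory.Measure.count : MeasureTheory.Measure ℤ)) =
      MeasureTheory.Measure.count := by
  refine MeasureTheory.Measure.ext_of_singleton fun x => ?_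
  rw [← Set.univ_pi_singleton x, MeasureTheory.Measure.pi_pi, Set.univ_pi_singleton]
  simp

/-- The `ℓ¹` Sobolev inequality, from the grid-lines form of the Loomis–Whitney inequality for
counting measure. -/
lemma sobolev_one_enorm {N : ℕ} (hN : 2 ≤ N) (v : ZN N → ℝ) (hv : v.support.Finite) :
    ∑' x, ‖v x‖ₑ ^ ((N : ℝ) / (N - 1)) ≤
      (∑' x, ∑ d ∈ nb N, ‖v (x + d) - v x‖ₑ) ^ ((N : ℝ) / (N - 1)) := by
  classical
  have hN' : (2 : ℝ) ≤ N := by exact_mod_cast hN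
  have hNpos : (0 : ℝ) < N - 1 := by linarith
  set G : ZN N → ENNReal := fun x => ∑ d ∈ nb N, ‖v (x + d) - v x‖ₑ with hG
  have hconj : Real.HolderConjugate (Fintype.card (Fin N) : ℝ) ((N : ℝ) / (N - 1)) := by
    rw [Real.holderConjugate_iff]
    simp only [Fintype.card_fin]
    refine ⟨by linarith, ?_⟩
    field_simp
    ring
  have key := MeasureTheory.lintegral_prod_lintegral_pow_le
    (fun _ : Fin N => (MeasureTheory.Measure.count : MeasureTheory.Measure ℤ)) hconj
    (f := G) (measurable_of_countable _)
  rw [pi_count] at key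
  simp only [MeasureTheory.lintegral_count, Fintype.card_fin] at key
  refine le_trans (ENNReal.tsum_le_tsum fun x => ?_) key
  have hline : ∀ i : Fin N, ‖v x‖ₑ ≤ ∑' t : ℤ, G (Function.update x i t) := by
    intro i
    have h1 := enorm_le_tsum_diff (fun t => v (Function.update x i t))
      (hv.preimage (Function.update_injective x i).injOn) (x i)
    simp only [Function.update_eq_self] at h1
    refine h1.trans (ENNReal.tsum_le_tsum fun t => ?_)
    have h2 : Function.update x i (t + 1) = Function.update x i t + Pi.single i 1 := by
      ext j
      by_cases hj : j = i
      · subst hj; simp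
      · simp [hj]
    rw [h2]
    exact Finset.single_le_sum
      (f := fun d => ‖v (Function.update x i t + d) - v (Function.update x i t)‖ₑ)
      (fun _ _ => zero_le) (single_mem_nb i)
  calc ‖v x‖ₑ ^ ((N : ℝ) / (N - 1)) = ∏ _i : Fin N, ‖v x‖ₑ ^ (1 / ((N : ℝ) - 1)) := by
        rw [Finset.prod_const, Finset.card_univ, Fintype.card_fin, ← ENNReal.rpow_mul_natCast]
        congr 1
        ring
    _ ≤ _ := Finset.prod_le_prod' fun i _ => ENNReal.rpow_le_rpow (hline i) (by positivity)

/-- `Σ_x |u(x)|^r`. -/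
def mass {N : ℕ} (r : ℝ) (u : ZN N → ℝ) : ℝ := ∑' x, |u x| ^ r

/-- `Σ_x Σ_{y∼x} |u(y) - u(x)|^p`, with the neighbours `y` enumerated by the unit steps. -/
def energy {N : ℕ} (p : ℝ) (u : ZN N → ℝ) : ℝ := ∑ d ∈ nb N, ∑' x, |u (x + d) - u x| ^ p

lemma mass_nonneg {N : ℕ} (r : ℝ) (u : ZN N → ℝ) : 0 ≤ mass r u :=
  tsum_nonneg fun _ => by positivity

lemma energy_nonneg {N : ℕ} (p : ℝ) (u : ZN N → ℝ) : 0 ≤ energy p u :=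
  Finset.sum_nonneg fun _ _ => tsum_nonneg fun _ => by positivity

lemma finite_shift {N : ℕ} {u : ZN N → ℝ} (hu : u.support.Finite) (d : ZN N) :
    (fun x => u (x + d)).support.Finite :=
  hu.preimage (add_left_injective d).injOn

/-- Any quantity built from `u(x + d)` and `u(x)` and vanishing at `(0, 0)` has finite support. -/
lemma finite_comp {N : ℕ} {u : ZN N → ℝ} (hu : u.support.Finite) (d : ZN N) (F : ℝ → ℝ → ℝ)
    (hF : F 0 0 = 0) : (fun x => F (u (x + d)) (u x)).support.Finite := by
  refine ((finite_shift hu d).union hu).subset fun x hx => ?_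
  by_contra h
  simp only [Set.mem_union, Function.mem_support, not_or, not_not] at h
  exact hx (by simp [h.1, h.2, hF])

lemma summable_comp {N : ℕ} {u : ZN N → ℝ} (hu : u.support.Finite) (d : ZN N) (F : ℝ → ℝ → ℝ)
    (hF : F 0 0 = 0) : Summable (fun x => F (u (x + d)) (u x)) :=
  summable_of_hasFiniteSupport (finite_comp hu d F hF)

lemma summable_mass {N : ℕ} {u : ZN N → ℝ} (hu : u.support.Finite) {r : ℝ} (hr : r ≠ 0) :
    Summable (fun x => |u x| ^ r) :=
  summable_comp hu 0 (fun _ b => |b| ^ r) (by simp [hr])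

lemma summable_energy {N : ℕ} {u : ZN N → ℝ} (hu : u.support.Finite) {p : ℝ} (hp : p ≠ 0)
    (d : ZN N) : Summable (fun x => |u (x + d) - u x| ^ p) :=
  summable_comp hu d (fun a b => |a - b| ^ p) (by simp [hp])

lemma sobolev_one {N : ℕ} (hN : 2 ≤ N) (v : ZN N → ℝ) (hv : v.support.Finite) :
    ∑' x, |v x| ^ ((N : ℝ) / (N - 1)) ≤
      (∑ d ∈ nb N, ∑' x, |v (x + d) - v x|) ^ ((N : ℝ) / (N - 1)) := by
  have hN' : (2 : ℝ) ≤ N := by exact_mod_cast hN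
  have hNpos : (0 : ℝ) < N - 1 := by linarith
  have hθ : 0 < (N : ℝ) / (N - 1) := by positivity
  have key := sobolev_one_enorm hN v hv
  have h1 : ∑' x, ‖v x‖ₑ ^ ((N : ℝ) / (N - 1)) =
      ENNReal.ofReal (∑' x, |v x| ^ ((N : ℝ) / (N - 1))) := by
    rw [ENNReal.ofReal_tsum_of_nonneg (fun _ => by positivity) (summable_mass hv hθ.ne')]
    refine tsum_congr fun x => ?_
    rw [← ENNReal.ofReal_rpow_of_nonneg (abs_nonneg _) hθ.le, ← Real.norm_eq_abs, ofReal_norm]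
  have hs : ∀ d, Summable (fun x => |v (x + d) - v x|) := fun d =>
    summable_comp hv d (fun a b => |a - b|) (by simp)
  have h2 : (∑' x, ∑ d ∈ nb N, ‖v (x + d) - v x‖ₑ) =
      ENNReal.ofReal (∑ d ∈ nb N, ∑' x, |v (x + d) - v x|) := by
    rw [← Summable.tsum_finsetSum (fun d _ => hs d),
      ENNReal.ofReal_tsum_of_nonneg (fun _ => Finset.sum_nonneg fun _ _ => abs_nonneg _)
        (summable_sum fun d _ => hs d)]
    refine tsum_congr fun x => ?_
    rw [ENNReal.ofReal_sum_of_nonneg fun _ _ => abs_nonneg _]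
    refine Finset.sum_congr rfl fun d _ => ?_
    rw [← Real.norm_eq_abs, ofReal_norm]
  have hnn : 0 ≤ ∑ d ∈ nb N, ∑' x, |v (x + d) - v x| :=
    Finset.sum_nonneg fun _ _ => tsum_nonneg fun _ => abs_nonneg _
  rw [h1, h2, ENNReal.ofReal_rpow_of_nonneg hnn hθ.le] at key
  exact (ENNReal.ofReal_le_ofReal_iff (by positivity)).1 key

lemma rpow_sub_rpow_le_of_le {a b γ : ℝ} (hb : 0 ≤ b) (hab : b ≤ a) (hγ : 1 ≤ γ) :
    a ^ γ - b ^ γ ≤ γ * a ^ (γ - 1) * (a - b) := by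
  rcases (hb.trans hab).eq_or_lt with h | ha
  · have : b = a := le_antisymm hab (h ▸ hb)
    simp [this]
  have h1 := one_add_mul_self_le_rpow_one_add (s := b / a - 1)
    (by have : 0 ≤ b / a := by positivity
        linarith) hγ
  rw [add_sub_cancel, Real.div_rpow hb ha.le, le_div_iff₀ (by positivity)] at h1
  have h2 : a ^ γ = a ^ (γ - 1) * a := by
    rw [← Real.rpow_add_one ha.ne']; simp
  have h3 : (1 + γ * (b / a - 1)) * a ^ γ = a ^ γ - γ * a ^ (γ - 1) * (a - b) := by
    rw [h2]; field_simp; ring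
  linarith

lemma abs_rpow_sub_rpow_le {a b γ : ℝ} (ha : 0 ≤ a) (hb : 0 ≤ b) (hγ : 1 ≤ γ) :
    |a ^ γ - b ^ γ| ≤ γ * (|a - b| * a ^ (γ - 1) + |a - b| * b ^ (γ - 1)) := by
  wlog hab : b ≤ a generalizing a b
  · have := this hb ha (le_of_not_ge hab)
    rw [abs_sub_comm, abs_sub_comm a b]
    linarith
  have h1 := rpow_sub_rpow_le_of_le hb hab hγ
  have h2 : b ^ γ ≤ a ^ γ := Real.rpow_le_rpow hb hab (by linarith)
  rw [abs_of_nonneg (by linarith), abs_of_nonneg (by linarith)]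
  have : 0 ≤ γ * ((a - b) * b ^ (γ - 1)) := by
    have : 0 ≤ a - b := by linarith
    positivity
  nlinarith

/-- The discrete Gagliardo–Nirenberg–Sobolev inequality: the `ℓ¹` version applied to `|u|^γ`,
`γ = p(N-1)/(N-p)`, combined with Hölder's inequality. -/
lemma sobolev {N : ℕ} (hN : 2 ≤ N) {p : ℝ} (hp1 : 1 < p) (hpN : p < N) :
    ∃ C : ℝ, 0 ≤ C ∧ ∀ u : ZN N → ℝ, u.support.Finite →
      mass (N * p / (N - p)) u ≤ C * energy p u ^ ((N : ℝ) / (N - p)) := by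
  have hN' : (2 : ℝ) ≤ N := by exact_mod_cast hN
  have hN1 : (0 : ℝ) < N - 1 := by linarith
  have hNp : (0 : ℝ) < N - p := by linarith
  have hp0 : 0 < p := by linarith
  have hpm : 0 < p - 1 := by linarith
  set ps : ℝ := N * p / (N - p) with hps
  have hps0 : 0 < ps := by positivity
  set γ : ℝ := p * (N - 1) / (N - p) with hγdef
  have hγ1 : γ - 1 = N * (p - 1) / (N - p) := by rw [hγdef]; field_simp; ring
  have hγ1' : 0 < γ - 1 := by rw [hγ1]; positivity
  set p' : ℝ := p / (p - 1) with hp'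
  have hp'0 : 0 < p' := by positivity
  have hconj : p.HolderConjugate p' := Real.HolderConjugate.conjExponent hp1
  set θ : ℝ := N / (N - 1) with hθdef
  have hθ : 0 < θ := by positivity
  set β : ℝ := (N - p) / ((N - 1) * p) with hβdef
  have hβ : 0 < β := by positivity
  set K : ℝ := (nb N).card * (2 * γ) with hK
  have hK0 : 0 ≤ K := by
    have : 0 ≤ γ := by linarith
    positivity
  refine ⟨(K ^ θ) ^ (1 / β), by positivity, fun u hu => ?_⟩
  set A := mass ps u with hA
  set E := energy p u with hE
  have hA0 : 0 ≤ A := mass_nonneg _ _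
  have hE0 : 0 ≤ E := energy_nonneg _ _
  have hpow : ∀ a : ℝ, 0 ≤ a → (a ^ (γ - 1)) ^ p' = a ^ ps := fun a ha => by
    rw [← Real.rpow_mul ha, hγ1, hp', hps]
    congr 1
    field_simp
  have hED : ∀ d ∈ nb N, ∑' x, |u (x + d) - u x| ^ p ≤ E := fun d hd =>
    Finset.single_le_sum (f := fun d => ∑' x, |u (x + d) - u x| ^ p)
      (fun _ _ => tsum_nonneg fun _ => by positivity) hd
  have hshift : ∀ d : ZN N, ∑' x, |u (x + d)| ^ ps = A := fun d =>
    (Equiv.addRight d).tsum_eq (fun x => |u x| ^ ps)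
  have hstep : ∀ d ∈ nb N, ∑' x, |(|u (x + d)| ^ γ) - |u x| ^ γ| ≤
      2 * γ * (E ^ (1 / p) * A ^ (1 / p')) := by
    intro d hd
    have hH1 := Real.inner_le_Lp_mul_Lq_tsum_of_nonneg hconj
      (f := fun x => |u (x + d) - u x|) (g := fun x => |u (x + d)| ^ (γ - 1))
      (fun _ => abs_nonneg _) (fun _ => by positivity) (summable_energy hu hp0.ne' d)
      (summable_comp hu d (fun a _ => (|a| ^ (γ - 1)) ^ p') (by simp [hγ1'.ne', hp'0.ne']))
    have hH2 := Real.inner_le_Lp_mul_Lq_tsum_of_nonneg hconj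
      (f := fun x => |u (x + d) - u x|) (g := fun x => |u x| ^ (γ - 1))
      (fun _ => abs_nonneg _) (fun _ => by positivity) (summable_energy hu hp0.ne' d)
      (summable_comp hu d (fun _ a => (|a| ^ (γ - 1)) ^ p') (by simp [hγ1'.ne', hp'0.ne']))
    simp only [hpow _ (abs_nonneg _)] at hH1 hH2
    rw [hshift d] at hH1
    change _ ≤ _ * A ^ (1 / p') at hH2
    have hb : (∑' x, |u (x + d) - u x| ^ p) ^ (1 / p) * A ^ (1 / p') ≤
        E ^ (1 / p) * A ^ (1 / p') :=
      mul_le_mul_of_nonneg_right (Real.rpow_le_rpow (tsum_nonneg fun _ => by positivity)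
        (hED d hd) (by positivity)) (by positivity)
    have hs1 : Summable fun x => |u (x + d) - u x| * |u (x + d)| ^ (γ - 1) :=
      summable_comp hu d (fun a b => |a - b| * |a| ^ (γ - 1)) (by simp)
    have hs2 : Summable fun x => |u (x + d) - u x| * |u x| ^ (γ - 1) :=
      summable_comp hu d (fun a b => |a - b| * |b| ^ (γ - 1)) (by simp)
    calc ∑' x, |(|u (x + d)| ^ γ) - |u x| ^ γ|
        ≤ ∑' x, γ * (|u (x + d) - u x| * |u (x + d)| ^ (γ - 1)
            + |u (x + d) - u x| * |u x| ^ (γ - 1)) := by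
          refine Summable.tsum_le_tsum (fun x => ?_)
            (summable_comp hu d (fun a b => |(|a| ^ γ) - |b| ^ γ|) (by simp))
            ((hs1.add hs2).mul_left γ)
          refine (abs_rpow_sub_rpow_le (abs_nonneg _) (abs_nonneg _) (by linarith)).trans ?_
          have := abs_abs_sub_abs_le_abs_sub (u (x + d)) (u x)
          have hγ0 : 0 ≤ γ := by linarith
          gcongr
      _ = γ * (∑' x, |u (x + d) - u x| * |u (x + d)| ^ (γ - 1)
            + ∑' x, |u (x + d) - u x| * |u x| ^ (γ - 1)) := by
          rw [tsum_mul_left, hs1.tsum_add hs2]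
      _ ≤ γ * (E ^ (1 / p) * A ^ (1 / p') + E ^ (1 / p) * A ^ (1 / p')) := by
          have hγ0 : 0 ≤ γ := by linarith
          gcongr
          · exact hH1.trans hb
          · exact hH2.trans hb
      _ = _ := by ring
  have hmain : A ≤ (K * (E ^ (1 / p) * A ^ (1 / p'))) ^ θ := by
    have h1 := sobolev_one hN (fun x => |u x| ^ γ)
      (finite_comp hu 0 (fun _ b => |b| ^ γ) (by
        have : γ ≠ 0 := by linarith
        simp [this]))
    have h2 : ∑' x, |(|u x| ^ γ)| ^ ((N : ℝ) / (N - 1)) = A := by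
      refine tsum_congr fun x => ?_
      rw [abs_of_nonneg (by positivity), ← Real.rpow_mul (abs_nonneg _)]
      congr 1
      rw [hγdef, hps]
      field_simp
    rw [h2] at h1
    refine h1.trans (Real.rpow_le_rpow (Finset.sum_nonneg fun _ _ => tsum_nonneg fun _ =>
      abs_nonneg _) ?_ hθ.le)
    refine (Finset.sum_le_card_nsmul _ _ _ hstep).trans (le_of_eq ?_)
    rw [nsmul_eq_mul, hK]; ring
  clear_value K
  rcases hA0.eq_or_lt with h | hApos
  · rw [← h]; positivity
  have hexp : 1 / p' * θ = 1 - β := by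
    rw [hp', hθdef, hβdef]; field_simp; ring
  rw [Real.mul_rpow hK0 (by positivity), Real.mul_rpow (by positivity) (by positivity),
    ← Real.rpow_mul hE0, ← Real.rpow_mul hA0, hexp, Real.rpow_sub hApos, Real.rpow_one] at hmain
  have h3 : A ^ β ≤ K ^ θ * E ^ (1 / p * θ) := by
    have h4 : 0 < A ^ β := by positivity
    have h5 : A ≤ (K ^ θ * E ^ (1 / p * θ)) * A / A ^ β := by
      refine hmain.trans (le_of_eq ?_); ring
    rw [le_div_iff₀ h4] at h5
    nlinarith
  have h6 := Real.rpow_le_rpow (by positivity) h3 (z := 1 / β) (by positivity)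
  rw [← Real.rpow_mul hA0, mul_one_div_cancel hβ.ne', Real.rpow_one,
    Real.mul_rpow (by positivity) (by positivity), ← Real.rpow_mul hE0] at h6
  refine h6.trans (le_of_eq ?_)
  congr 2
  rw [hθdef, hβdef]
  field_simp

/-! ### Scaling, translation and one-point perturbation -/

lemma mass_smul {N : ℕ} (r c : ℝ) (u : ZN N → ℝ) :
    mass r (fun x => c * u x) = |c| ^ r * mass r u := by
  simp only [mass, abs_mul, Real.mul_rpow (abs_nonneg _) (abs_nonneg _), tsum_mul_left]

lemma energy_smul {N : ℕ} (p c : ℝ) (u : ZN N → ℝ) :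
    energy p (fun x => c * u x) = |c| ^ p * energy p u := by
  simp only [energy, ← mul_sub, abs_mul, Real.mul_rpow (abs_nonneg _) (abs_nonneg _),
    tsum_mul_left, Finset.mul_sum]

lemma mass_translate {N : ℕ} (r : ℝ) (u : ZN N → ℝ) (a : ZN N) :
    mass r (fun x => u (x + a)) = mass r u :=
  (Equiv.addRight a).tsum_eq (fun x => |u x| ^ r)

lemma energy_translate {N : ℕ} (p : ℝ) (u : ZN N → ℝ) (a : ZN N) :
    energy p (fun x => u (x + a)) = energy p u := by
  refine Finset.sum_congr rfl fun d _ => ?_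
  rw [← (Equiv.addRight a).tsum_eq (fun x => |u (x + d) - u x| ^ p)]
  refine tsum_congr fun x => ?_
  simp [add_right_comm]

lemma mass_abs {N : ℕ} (r : ℝ) (u : ZN N → ℝ) : mass r (fun x => |u x|) = mass r u := by
  simp [mass]

lemma energy_abs_le {N : ℕ} {p : ℝ} (hp : 0 < p) {u : ZN N → ℝ} (hu : u.support.Finite) :
    energy p (fun x => |u x|) ≤ energy p u := by
  refine Finset.sum_le_sum fun d _ => Summable.tsum_le_tsum (fun x => ?_)
    (summable_comp hu d (fun a b => |(|a|) - (|b|)| ^ p) (by simp [hp.ne']))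
    (summable_energy hu hp.ne' d)
  exact Real.rpow_le_rpow (abs_nonneg _) (abs_abs_sub_abs_le_abs_sub _ _) hp.le

lemma finite_update {N : ℕ} {u : ZN N → ℝ} (hu : u.support.Finite) (z : ZN N) (s : ℝ) :
    (Function.update u z s).support.Finite := by
  refine (hu.union (Set.finite_singleton z)).subset fun x hx => ?_
  by_cases h : x = z
  · right; exact h
  · left; simpa [h] using hx

lemma mass_update {N : ℕ} {r : ℝ} (hr : r ≠ 0) {u : ZN N → ℝ} (hu : u.support.Finite)
    (z : ZN N) (s : ℝ) :
    mass r (Function.update u z s) = mass r u + (|s| ^ r - |u z| ^ r) := by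
  have h := (summable_mass (finite_update hu z s) hr).tsum_sub (summable_mass hu hr)
  rw [tsum_eq_single z (fun x hx => by simp [hx])] at h
  simp only [Function.update_self] at h
  unfold mass
  linarith

lemma energy_update {N : ℕ} {p : ℝ} (hp : p ≠ 0) {u : ZN N → ℝ} (hu : u.support.Finite)
    (z : ZN N) (s : ℝ) :
    energy p (Function.update u z s) = energy p u +
      2 * ∑ d ∈ nb N, (|u (z + d) - s| ^ p - |u (z + d) - u z| ^ p) := by
  have key : ∀ d ∈ nb N, ∑' x, |Function.update u z s (x + d) - Function.update u z s x| ^ p =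
      ∑' x, |u (x + d) - u x| ^ p + ((|u (z + d) - s| ^ p - |u (z + d) - u z| ^ p) +
        (|u (z + -d) - s| ^ p - |u (z + -d) - u z| ^ p)) := by
    intro d hd
    have hd0 := ne_zero_of_mem_nb hd
    have h := (summable_energy (finite_update hu z s) hp d).tsum_sub (summable_energy hu hp d)
    have hne : z ≠ z + -d := fun h => hd0 (by simpa using h)
    rw [tsum_eq_sum (s := {z, z + -d}), Finset.sum_pair hne] at h
    · have e1 : Function.update u z s (z + d) = u (z + d) :=
        Function.update_of_ne (by simpa using hd0) _ _
      have e2 : Function.update u z s (z + -d) = u (z + -d) := Function.update_of_ne hne.symm _ _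
      rw [e1, e2, neg_add_cancel_right, Function.update_self, abs_sub_comm s,
        abs_sub_comm (u z) (u (z + -d))] at h
      linarith
    · intro x hx
      simp only [Finset.mem_insert, Finset.mem_singleton, not_or] at hx
      have h2 : x + d ≠ z := fun h => hx.2 (by rw [← h]; simp)
      rw [Function.update_of_ne hx.1, Function.update_of_ne h2, sub_self]
  unfold energy
  rw [Finset.sum_congr rfl key, Finset.sum_add_distrib, Finset.sum_add_distrib,
    sum_nb_neg (fun d => |u (z + d) - s| ^ p - |u (z + d) - u z| ^ p)]
  ring

/-! ### Normalised maximising sequences -/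

lemma mass_le_of_bound {N : ℕ} {r q M : ℝ} (hr : 0 < r) (hrq : r ≤ q) {u : ZN N → ℝ}
    (hu : u.support.Finite) (hM : ∀ x, |u x| ≤ M) :
    mass q u ≤ M ^ (q - r) * mass r u := by
  unfold mass
  rw [← tsum_mul_left]
  refine Summable.tsum_le_tsum (fun x => ?_) (summable_mass hu (by linarith))
    ((summable_mass hu hr.ne').mul_left _)
  have h : |u x| ^ q = |u x| ^ (q - r) * |u x| ^ r := by
    rw [← Real.rpow_add_of_nonneg (abs_nonneg _) (by linarith) hr.le]; simp
  rw [h]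
  exact mul_le_mul_of_nonneg_right
    (Real.rpow_le_rpow (abs_nonneg _) (hM x) (by linarith)) (by positivity)

lemma abs_le_of_mass_le {N : ℕ} {r C : ℝ} (hr : 0 < r) {u : ZN N → ℝ} (hu : u.support.Finite)
    (hC : mass r u ≤ C) (x : ZN N) : |u x| ≤ C ^ (1 / r) := by
  have h1 : |u x| ^ r ≤ C :=
    ((summable_mass hu hr.ne').le_tsum x (fun _ _ => by positivity)).trans hC
  have h2 := Real.rpow_le_rpow (by positivity) h1 (z := 1 / r) (by positivity)
  rwa [← Real.rpow_mul (abs_nonneg _), mul_one_div_cancel hr.ne', Real.rpow_one] at h2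

/-- There are a best constant `S` in `‖u‖_q^q ≤ S E(u)^{q/p}` and a nonnegative maximising sequence
of energy at most `1`, translated so that each maximum sits at the origin.  Since `q > p*`, these
maxima are bounded below: `‖u‖_q^q ≤ u(0)^{q-p*} ‖u‖_{p*}^{p*}`. -/
lemma exists_maximizing {N : ℕ} (hN : 2 ≤ N) {p q : ℝ} (hp1 : 1 < p) (hpN : p < N)
    (hq : (N : ℝ) * p / (N - p) < q) :
    ∃ S C M c : ℝ, 0 < S ∧ 0 < c ∧
      (∀ u : ZN N → ℝ, u.support.Finite → mass q u ≤ S * energy p u ^ (q / p)) ∧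
      ∃ u : ℕ → ZN N → ℝ, (∀ n, (u n).support.Finite) ∧ (∀ n x, 0 ≤ u n x) ∧
        (∀ n x, u n x ≤ M) ∧ (∀ n, c ≤ u n 0) ∧ (∀ n, energy p (u n) ≤ 1) ∧
        (∀ n, mass ((N : ℝ) * p / (N - p)) (u n) ≤ C) ∧
        (∀ n : ℕ, S - S / 2 * (1 / ((n : ℝ) + 1)) ≤ mass q (u n)) := by
  obtain ⟨C, hC0, hsob⟩ := sobolev (N := N) hN hp1 hpN
  have hN' : (2 : ℝ) ≤ N := by exact_mod_cast hN
  have hNp : (0 : ℝ) < N - p := by linarith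
  have hp0 : 0 < p := by linarith
  set ps : ℝ := N * p / (N - p) with hps
  have hps0 : 0 < ps := by positivity
  have hq0 : 0 < q := by linarith
  have hqp : 0 < q / p := by positivity
  have hA : ∀ u : ZN N → ℝ, u.support.Finite → energy p u ≤ 1 → mass ps u ≤ C := by
    intro u hu hE
    refine (hsob u hu).trans ?_
    have := Real.rpow_le_one (energy_nonneg p u) hE (z := N / (N - p)) (by positivity)
    nlinarith
  have hM : ∀ u : ZN N → ℝ, u.support.Finite → energy p u ≤ 1 → ∀ x, |u x| ≤ C ^ (1 / ps) :=
    fun u hu hE => abs_le_of_mass_le hps0 hu (hA u hu hE)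
  set T : Set ℝ := {m | ∃ u : ZN N → ℝ, u.support.Finite ∧ energy p u ≤ 1 ∧ m = mass q u} with hT
  have hbdd : BddAbove T := by
    refine ⟨(C ^ (1 / ps)) ^ (q - ps) * C, ?_⟩
    rintro m ⟨u, hu, hE, rfl⟩
    refine (mass_le_of_bound hps0 hq.le hu (hM u hu hE)).trans ?_
    exact mul_le_mul_of_nonneg_left (hA u hu hE) (by positivity)
  have hTne : T.Nonempty := ⟨_, 0, by simp, by simp [energy, hp0.ne'], rfl⟩
  set S := sSup T with hS
  have hineq : ∀ u : ZN N → ℝ, u.support.Finite → mass q u ≤ S * energy p u ^ (q / p) := by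
    intro u hu
    rcases (energy_nonneg p u).eq_or_lt with hE | hE
    · have h1 : mass ps u ≤ 0 := by
        refine (hsob u hu).trans (le_of_eq ?_)
        rw [← hE, Real.zero_rpow (by positivity), mul_zero]
      have h2 : ∀ x, |u x| ≤ 0 := fun x => by
        have := abs_le_of_mass_le hps0 hu h1 x
        rwa [Real.zero_rpow (by positivity)] at this
      have h3 := mass_le_of_bound hps0 hq.le hu h2
      rw [← hE, Real.zero_rpow hqp.ne', mul_zero]
      rwa [Real.zero_rpow (by linarith), zero_mul] at h3
    · set E := energy p u with hEdef
      have hc0 : 0 < E ^ (-(1 / p)) := by positivity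
      have h1 : energy p (fun x => E ^ (-(1 / p)) * u x) ≤ 1 := by
        rw [energy_smul, abs_of_pos hc0, ← Real.rpow_mul hE.le, ← hEdef]
        have : -(1 / p) * p = -1 := by field_simp
        rw [this, Real.rpow_neg_one, inv_mul_cancel₀ hE.ne']
      have h2 : mass q (fun x => E ^ (-(1 / p)) * u x) ≤ S :=
        le_csSup hbdd ⟨_, hu.subset fun x hx => by
          simp only [Function.mem_support, ne_eq, mul_eq_zero, not_or] at hx
          exact hx.2, h1, rfl⟩
      rw [mass_smul, abs_of_pos hc0, ← Real.rpow_mul hE.le] at h2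
      have h3 : -(1 / p) * q = -(q / p) := by ring
      rw [h3, Real.rpow_neg hE.le] at h2
      have h4 : 0 < E ^ (q / p) := by positivity
      rwa [inv_mul_le_iff₀ h4, mul_comm] at h2
  have hSpos : 0 < S := by
    -- the constant is tested on the indicator function of a point
    have h0 : (Pi.single 0 1 : ZN N → ℝ).support.Finite :=
      (Set.finite_singleton (0 : ZN N)).subset Pi.support_single_subset
    have h1 := hineq _ h0
    have h2 : (1 : ℝ) ≤ mass q (Pi.single 0 1 : ZN N → ℝ) := by
      have := (summable_mass h0 hq0.ne').le_tsum 0 (fun _ _ => by positivity)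
      simpa [mass] using this
    have h3 : 0 ≤ energy p (Pi.single 0 1 : ZN N → ℝ) ^ (q / p) :=
      Real.rpow_nonneg (energy_nonneg _ _) _
    by_contra! h
    nlinarith
  refine ⟨S, C, C ^ (1 / ps), (S / 2 / (C + 1)) ^ (1 / (q - ps)), hSpos, by positivity, hineq, ?_⟩
  have hex : ∀ n : ℕ, ∃ v : ZN N → ℝ, v.support.Finite ∧ (∀ x, 0 ≤ v x) ∧
      (∀ x, v x ≤ v 0) ∧ energy p v ≤ 1 ∧ S - S / 2 * (1 / ((n : ℝ) + 1)) ≤ mass q v := by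
    intro n
    have hlt : S - S / 2 * (1 / ((n : ℝ) + 1)) < S := by
      have : 0 < S / 2 * (1 / ((n : ℝ) + 1)) := by positivity
      linarith
    obtain ⟨_, ⟨u, hu, hE, rfl⟩, hm⟩ := exists_lt_of_lt_csSup hTne hlt
    have hua : (fun x => |u x|).support.Finite :=
      finite_comp hu 0 (fun _ b => |b|) (by simp)
    obtain ⟨x0, -, hx0⟩ := (insert 0 hua.toFinset).exists_max_image (fun x => |u x|)
      ⟨0, by simp⟩
    refine ⟨fun x => |u (x + x0)|, finite_shift hua x0, fun x => abs_nonneg _, fun x => ?_, ?_, ?_⟩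
    · simp only [zero_add]
      by_cases h : u (x + x0) = 0
      · simp [h]
      · exact hx0 _ (by simp [h])
    · rw [energy_translate p (fun x => |u x|)]
      exact (energy_abs_le hp0 hu).trans hE
    · rw [mass_translate q (fun x => |u x|), mass_abs]
      exact hm.le
  choose v hv hv0 hvmax hvE hvm using hex
  refine ⟨v, hv, hv0, fun n x => (le_abs_self _).trans (hM _ (hv n) (hvE n) x), fun n => ?_, hvE,
    fun n => hA _ (hv n) (hvE n), hvm⟩
  have h1 : S / 2 ≤ mass q (v n) := by
    refine le_trans ?_ (hvm n)
    have : 1 / ((n : ℝ) + 1) ≤ 1 := by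
      rw [div_le_one (by positivity)]; linarith [(Nat.cast_nonneg n : (0 : ℝ) ≤ n)]
    nlinarith
  have h2 := mass_le_of_bound hps0 hq.le (hv n) (M := v n 0) (fun x => by
    rw [abs_of_nonneg (hv0 n x)]; exact hvmax n x)
  have h3 : S / 2 / (C + 1) ≤ v n 0 ^ (q - ps) := by
    rw [div_le_iff₀ (by positivity)]
    have h4 : 0 ≤ v n 0 ^ (q - ps) := Real.rpow_nonneg (hv0 n 0) _
    nlinarith [hA _ (hv n) (hvE n)]
  have hqs : 0 < q - ps := by linarith
  have h5 := Real.rpow_le_rpow (by positivity) h3 (z := 1 / (q - ps)) (by positivity)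
  rwa [← Real.rpow_mul (hv0 n 0), mul_one_div_cancel hqs.ne', Real.rpow_one] at h5

/-! ### Passage to the limit -/

lemma pLap_eq {N : ℕ} (p : ℝ) (u : ZN N → ℝ) (x : ZN N) :
    pLap p u x = ∑ d ∈ nb N, |u (x + d) - u x| ^ (p - 2) * (u (x + d) - u x) :=
  tsum_adj x (fun y => |u y - u x| ^ (p - 2) * (u y - u x))

lemma gradPow_eq {N : ℕ} (p : ℝ) (u : ZN N → ℝ) (x : ZN N) :
    gradPow p u x = ∑ d ∈ nb N, |u (x + d) - u x| ^ p :=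
  tsum_adj x (fun y => |u y - u x| ^ p)

/-- Fatou's lemma for series with uniformly bounded sums. -/
lemma summable_of_tendsto {α : Type*} {f : ℕ → α → ℝ} {g : α → ℝ} {C : ℝ}
    (hf : ∀ n a, 0 ≤ f n a) (hs : ∀ n, Summable (f n)) (hC : ∀ n, ∑' a, f n a ≤ C)
    (hlim : ∀ a, Tendsto (fun n => f n a) atTop (𝓝 (g a))) : Summable g := by
  refine summable_of_sum_le (c := C)
    (fun a => ge_of_tendsto' (hlim a) (fun n => hf n a)) fun s => ?_
  refine le_of_tendsto' (tendsto_finsetSum s fun a _ => hlim a) fun n => ?_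
  exact ((hs n).sum_le_tsum s (fun a _ => hf n a)).trans (hC n)

/-- The Euler–Lagrange equation for a pointwise limit of a maximising sequence.  Changing one value
of `u_n` changes both functionals by finitely many terms, so the optimal inequality for the
perturbed functions passes to the limit and says that a function of the new value `s` is minimal
at `s = w(z)`. -/
lemma euler_lagrange {N : ℕ} {p q S : ℝ} (hp1 : 1 < p) (hpq : p < q)
    (hineq : ∀ u : ZN N → ℝ, u.support.Finite → mass q u ≤ S * energy p u ^ (q / p))
    (hS : 0 < S) {u : ℕ → ZN N → ℝ} (hu : ∀ n, (u n).support.Finite)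
    (hE : ∀ n, energy p (u n) ≤ 1) (hmass : Tendsto (fun n => mass q (u n)) atTop (𝓝 S))
    {w : ZN N → ℝ} (hw : ∀ x, Tendsto (fun n => u n x) atTop (𝓝 (w x))) (z : ZN N) :
    2 * S * pLap p w z + |w z| ^ (q - 2) * w z = 0 := by
  have hp0 : 0 < p := by linarith
  have hq1 : 1 < q := by linarith
  have hq0 : 0 < q := by linarith
  have hqp : 0 < q / p := by positivity
  set e : ℝ → ℝ := fun s => 2 * ∑ d ∈ nb N, (|w (z + d) - s| ^ p - |w (z + d) - w z| ^ p) with he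
  set F : ℝ → ℝ := fun s => S * (1 + e s) ^ (q / p) - (S + (|s| ^ q - |w z| ^ q)) with hF
  have he0 : e (w z) = 0 := by simp [he]
  have hF0 : F (w z) = 0 := by simp [hF, he0]
  have hFnn : ∀ s, 0 ≤ F s := by
    intro s
    have hl : Tendsto (fun n => mass q (u n) + (|s| ^ q - |u n z| ^ q)) atTop
        (𝓝 (S + (|s| ^ q - |w z| ^ q))) :=
      hmass.add (tendsto_const_nhds.sub ((hw z).abs.rpow_const (Or.inr hq0.le)))
    have hr : Tendsto (fun n => S * (1 + 2 * ∑ d ∈ nb N,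
        (|u n (z + d) - s| ^ p - |u n (z + d) - u n z| ^ p)) ^ (q / p)) atTop
        (𝓝 (S * (1 + e s) ^ (q / p))) := by
      refine Tendsto.const_mul S (Tendsto.rpow_const ?_ (Or.inr hqp.le))
      refine (Tendsto.const_mul 2 (tendsto_finsetSum _ fun d _ => ?_)).const_add 1
      exact (((hw _).sub_const s).abs.rpow_const (Or.inr hp0.le)).sub
        (((hw _).sub (hw z)).abs.rpow_const (Or.inr hp0.le))
    have := le_of_tendsto_of_tendsto' hl hr fun n => by
      rw [← mass_update hq0.ne' (hu n)]
      refine (hineq _ (finite_update (hu n) z s)).trans ?_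
      refine mul_le_mul_of_nonneg_left (Real.rpow_le_rpow (energy_nonneg _ _) ?_ hqp.le) hS.le
      rw [energy_update hp0.ne' (hu n)]
      linarith [hE n]
    simp only [hF]
    linarith
  have hde : HasDerivAt e (-(2 * p * pLap p w z)) (w z) := by
    have h1 : ∀ d ∈ nb N, HasDerivAt (fun s => |w (z + d) - s| ^ p - |w (z + d) - w z| ^ p)
        (-(p * (|w (z + d) - w z| ^ (p - 2) * (w (z + d) - w z)))) (w z) := by
      intro d _
      have h2 := ((hasDerivAt_abs_rpow (w (z + d) - w z) hp1).comp (w z)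
        ((hasDerivAt_id (w z)).const_sub (w (z + d)))).sub_const (|w (z + d) - w z| ^ p)
      refine h2.congr_deriv ?_
      ring
    refine ((HasDerivAt.fun_sum h1).const_mul 2).congr_deriv ?_
    rw [pLap_eq, Finset.sum_neg_distrib, ← Finset.mul_sum]
    ring
  have hdF : HasDerivAt F (S * (-(2 * p * pLap p w z) * (q / p) * (1 + e (w z)) ^ (q / p - 1))
      - q * |w z| ^ (q - 2) * w z) (w z) := by
    have h1 := ((hde.const_add 1).rpow_const (p := q / p)
      (Or.inl (by rw [he0]; norm_num))).const_mul S
    exact h1.sub (((hasDerivAt_abs_rpow (w z) hq1).sub_const (|w z| ^ q)).const_add S)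
  have hmin : IsLocalMin F (w z) := Filter.Eventually.of_forall fun s => by
    rw [hF0]; exact hFnn s
  have h0 := hmin.hasDerivAt_eq_zero hdF
  rw [he0, add_zero, Real.one_rpow, mul_one] at h0
  have h1 : S * (-(2 * p * pLap p w z) * (q / p)) - q * |w z| ^ (q - 2) * w z =
      -q * (2 * S * pLap p w z + |w z| ^ (q - 2) * w z) := by
    field_simp
    ring
  rw [h1] at h0
  exact (mul_eq_zero.1 h0).resolve_left (by linarith)

/-- The strong maximum principle: if `w ≥ 0` and `Δ_p w ≤ 0` wherever `w` vanishes, then `w` is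
positive everywhere as soon as `w(0) > 0`. -/
lemma pos_of_pLap {N : ℕ} {p : ℝ} {w : ZN N → ℝ} (hw : ∀ x, 0 ≤ w x) (h0 : 0 < w 0)
    (hL : ∀ x, w x = 0 → pLap p w x ≤ 0) (x : ZN N) : 0 < w x := by
  have hzero : ∀ x, w x = 0 → ∀ d ∈ nb N, w (x + d) = 0 := by
    intro x hx d hd
    by_contra hne
    have hpos : 0 < w (x + d) := lt_of_le_of_ne (hw _) (Ne.symm hne)
    have h1 := hL x hx
    rw [pLap_eq] at h1
    simp only [hx, sub_zero] at h1
    have h2 := Finset.single_le_sum (f := fun d => |w (x + d)| ^ (p - 2) * w (x + d))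
      (fun d _ => mul_nonneg (by positivity) (hw _)) hd
    have h3 : 0 < |w (x + d)| ^ (p - 2) * w (x + d) := by
      have : 0 < |w (x + d)| := abs_pos.2 hne
      positivity
    linarith
  -- translations preserving the zero set of `w` form a subgroup, which contains the unit steps
  let H : AddSubgroup (ZN N) :=
    { carrier := {v | ∀ y, w y = 0 ↔ w (y + v) = 0}
      zero_mem' := fun y => by simp
      add_mem' := fun {a b} ha hb y => by rw [ha y, hb (y + a), add_assoc]
      neg_mem' := fun {a} ha y => by rw [ha (y + -a), neg_add_cancel_right] }
  have hstep : ∀ d ∈ nb N, d ∈ H := fun d hd y =>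
    ⟨fun h => hzero y h d hd, fun h => by
      simpa using hzero (y + d) h (-d) (neg_mem_nb hd)⟩
  have hx : x ∈ H := by
    rw [← Finset.univ_sum_single x]
    refine H.sum_mem fun i _ => ?_
    have : (Pi.single i (x i) : ZN N) = x i • Pi.single i 1 := by
      rw [← Pi.single_smul]; simp
    rw [this]
    exact H.zsmul_mem (hstep _ (single_mem_nb i)) _
  have := (hx 0).not.1 h0.ne'
  rw [zero_add] at this
  exact lt_of_le_of_ne (hw x) (Ne.symm this)

/-- existence of a positive solution of `Δ_p u + u^{q-1} = 0` on `ℤ^N`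
in the supercritical case `q > p*`. -/
theorem stmt4 (N : ℕ) (hN : 3 ≤ N) (p q : ℝ) (hp1 : 1 < p) (hpN : p < (N : ℝ))
    (hq : (N : ℝ) * p / ((N : ℝ) - p) < q) :
    ∃ u : ZN N → ℝ, MemD p ((N : ℝ) * p / ((N : ℝ) - p)) u ∧
      (∀ x, 0 < u x) ∧ ∀ x, pLap p u x + u x ^ (q - 1) = 0 := by
  have hN3 : (3 : ℝ) ≤ N := by exact_mod_cast hN
  have hNp : (0 : ℝ) < N - p := by linarith
  have hp0 : 0 < p := by linarith
  obtain ⟨S, C, M, c, hS, hc, hineq, u, hu, hu0, huM, huc, huE, huA, hum⟩ :=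
    exists_maximizing (N := N) (by omega) hp1 hpN hq
  have hps0 : 0 < (N : ℝ) * p / (N - p) := by positivity
  have hps : p < (N : ℝ) * p / (N - p) := by
    rw [lt_div_iff₀ hNp]; nlinarith
  generalize (N : ℝ) * p / (N - p) = ps at *
  have hpq : p < q := hps.trans hq
  have hq0 : 0 < q := by linarith
  -- pointwise limit along a subsequence
  obtain ⟨w, hwmem, φ, hφ, hlim⟩ :=
    (isCompact_univ_pi (fun _ : ZN N => isCompact_Icc (a := (0 : ℝ)) (b := M))).tendsto_subseq
      (x := u) (fun n x _ => ⟨hu0 n x, huM n x⟩)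
  have hw : ∀ x, Tendsto (fun n => u (φ n) x) atTop (𝓝 (w x)) := fun x =>
    (tendsto_pi_nhds.1 hlim) x
  have hw0 : ∀ x, 0 ≤ w x := fun x => (hwmem x trivial).1
  have hmass : Tendsto (fun n => mass q (u n)) atTop (𝓝 S) := by
    have h1 : Tendsto (fun n : ℕ => S - S / 2 * (1 / ((n : ℝ) + 1))) atTop (𝓝 S) := by
      simpa using (tendsto_one_div_add_atTop_nhds_zero_nat.const_mul (S / 2)).const_sub S
    refine tendsto_of_tendsto_of_tendsto_of_le_of_le h1 tendsto_const_nhds hum fun n => ?_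
    refine (hineq _ (hu n)).trans ?_
    have := Real.rpow_le_one (energy_nonneg p (u n)) (huE n) (z := q / p) (by positivity)
    nlinarith
  have hEL := euler_lagrange hp1 hpq hineq hS (fun n => hu (φ n)) (fun n => huE (φ n))
    (hmass.comp hφ.tendsto_atTop) hw
  have hpos : ∀ x, 0 < w x := by
    refine pos_of_pLap (p := p) hw0 (hc.trans_le (ge_of_tendsto' (hw 0) fun n => huc (φ n)))
      fun x hx => ?_
    have := hEL x
    rw [hx, mul_zero, add_zero] at this
    exact ((mul_eq_zero.1 this).resolve_left (by positivity)).le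
  have hmem : Summable fun x => |w x| ^ ps :=
    summable_of_tendsto (fun n x => by positivity) (fun n => summable_mass (hu (φ n)) hps0.ne')
      (fun n => huA (φ n)) (fun x => (hw x).abs.rpow_const (Or.inr hps0.le))
  have hgrad : Summable fun x => gradPow p w x := by
    simp only [gradPow_eq]
    refine summable_of_tendsto (C := 1)
      (f := fun n x => ∑ d ∈ nb N, |u (φ n) (x + d) - u (φ n) x| ^ p)
      (fun n x => Finset.sum_nonneg fun _ _ => by positivity)
      (fun n => summable_sum fun d _ => summable_energy (hu (φ n)) hp0.ne' d) (fun n => ?_)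
      (fun x => tendsto_finsetSum _ fun d _ =>
        ((hw _).sub (hw x)).abs.rpow_const (Or.inr hp0.le))
    rw [Summable.tsum_finsetSum fun d _ => summable_energy (hu (φ n)) hp0.ne' d]
    exact huE (φ n)
  -- `k` is chosen so that `k ^ (p - 1) = 2 * S * k ^ (q - 1)`, which absorbs the multiplier
  obtain ⟨k, hk, hkS⟩ : ∃ k : ℝ, 0 < k ∧ k ^ (p - 1) = 2 * S * k ^ (q - 1) := by
    refine ⟨(2 * S) ^ (1 / (p - q)), by positivity, ?_⟩
    have hne : p - q ≠ 0 := by linarith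
    have h2S : 0 < 2 * S := by positivity
    rw [← Real.rpow_mul h2S.le, ← Real.rpow_mul h2S.le, ← Real.rpow_one_add' h2S.le]
    · congr 1
      field_simp
      ring
    · have : 1 + 1 / (p - q) * (q - 1) = (p - 1) / (p - q) := by
        field_simp
        ring
      rw [this]
      exact div_ne_zero (by linarith) hne
  refine ⟨fun x => k * w x, ⟨?_, ?_⟩, fun x => mul_pos hk (hpos x), fun x => ?_⟩
  · refine (hmem.mul_left (|k| ^ ps)).congr fun x => ?_
    rw [abs_mul, Real.mul_rpow (abs_nonneg _) (abs_nonneg _)]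
  · refine (hgrad.mul_left (|k| ^ p)).congr fun x => ?_
    simp only [gradPow_eq, Finset.mul_sum, ← mul_sub, abs_mul,
      Real.mul_rpow (abs_nonneg _) (abs_nonneg _)]
  · have h1 : pLap p (fun x => k * w x) x = k ^ (p - 1) * pLap p w x := by
      simp only [pLap_eq, Finset.mul_sum]
      refine Finset.sum_congr rfl fun d _ => ?_
      have h2 : k ^ (p - 1) = k ^ (p - 2) * k := by
        rw [← Real.rpow_add_one hk.ne']; ring_nf
      rw [← mul_sub, abs_mul, Real.mul_rpow (abs_nonneg _) (abs_nonneg _), abs_of_pos hk, h2]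
      ring
    have h3 : w x ^ (q - 1) = |w x| ^ (q - 2) * w x := by
      rw [abs_of_pos (hpos x), ← Real.rpow_add_one (hpos x).ne']; ring_nf
    rw [h1, hkS, Real.mul_rpow hk.le (hw0 x), h3]
    have := hEL x
    linear_combination k ^ (q - 1) * this
end
end

section
/- Let r, s > 1, 0 < λ < N, and 1/r + 1/s + λ/N > 2. Let t > 1 be defined by 1/t + 1/s = 1 and set K := sup{‖|i|^{−λ} ∗ f‖_t : f ∈ ℓ^r(ℤ^N), ‖f‖_r = 1}. Then there exists a pair of functions f ∈ ℓ^r(ℤ^N), g ∈ ℓ^s(ℤ^N) with f(i) > 0 and g(i) > 0 for all i ∈ ℤ^N, ‖f‖_r = ‖g‖_s = 1, satisfying the Euler–Lagrange system: K·f(i)^{r−1} = Σ_{j≠i} g(j)/|i−j|^λ and K·g(i)^{s−1} = Σ_{j≠i} f(j)/|i−j|^λ for every i ∈ ℤ^N. -/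
/-!
The proof is the direct method for the form `B(f, g) = ∑_{i ≠ j} f(i) g(j) / |i - j|^λ`, for which
`K` is the best constant in `B(f, g) ≤ K ‖f‖_r ‖g‖_s` (`Params.bil_le`).

*No vanishing.* Because `1/r + 1/s + λ/N > 2` is strict, Young's convolution inequality (`young`)
still bounds `B` after the exponent `r` is raised to some `p > r`: choose `q` with
`1/p + 1/s + 1/q = 2`; the kernel lies in `ℓ^q` since `λ q > N`. As `‖f‖_p` is controlled by `‖f‖_r`
and a power of `sup |f|`, this gives `B(|f|, |g|) ≤ C (sup |f|)^θ` with `θ > 0` on the unit balls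
(`Params.exists_bound`). So almost maximizing `f` have a value bounded below, and by translation
invariance it sits at the origin (`Params.exists_max_pair`).

*Passage to the limit.* Compactness of `[0,1]^(ℤ^N)` yields a pointwise convergent subsequence of
almost maximizing pairs `(F n, G n)`. The values of the convolutions converge as well, since every
row of the kernel lies in the dual space (`Params.tendsto_conv`). The sequence need not converge in
norm, but changing a single value `F n i` to `y` in `B(v, G n) ≤ K ‖v‖_r` gives
`B(F n, G n) + (y - F n i) (|i|^{-λ} ∗ G n)(i) ≤ K (1 + |y|^r - (F n i)^r)^{1/r}`, where every term
has a limit. The limiting inequality is an equality at `y = f i`, and the first-order condition there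
is the Euler–Lagrange equation for `(f, g)` (`Params.limit_equation`).

*Normalization and positivity.* Testing the two equations gives
`B(f, g) = K ‖f‖_r^r = K ‖g‖_s^s = K a` with `0 < a ≤ 1`, while `B(f, g) ≤ K a^{1/r + 1/s}`. As
`1/r + 1/s > 2 - λ/N > 1`, this forces `a = 1`. Finally `f 0 > 0` spreads to all lattice points
through the equations, because the kernel is positive off the diagonal.
-/

open Filter Topology

noncomputable section

/-- Euclidean distance between lattice points, viewed in `ℝ^N`. -/
def eudist {N : ℕ} (i j : ZN N) : ℝ := Real.sqrt (∑ k, ((i k : ℝ) - (j k : ℝ)) ^ 2)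

/-- `(|i|^{-λ} ∗ f)(i) = Σ_{j ≠ i} f(j)/|i-j|^λ`. -/
def hlsConv {N : ℕ} (lam : ℝ) (f : ZN N → ℝ) (i : ZN N) : ℝ :=
  ∑' j : ZN N, if j = i then 0 else f j / eudist i j ^ lam

/-- The bilinear HLS sum `Σ_{i ≠ j} f(i) g(j) / |i-j|^λ`. -/
def hlsSum {N : ℕ} (lam : ℝ) (f g : ZN N → ℝ) : ℝ :=
  ∑' q : ZN N × ZN N, if q.1 = q.2 then 0 else f q.1 * g q.2 / eudist q.1 q.2 ^ lam

/-! ### The kernel -/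

/-- The kernel `κ(i, j) = |i - j|^{-λ}` off the diagonal and `κ(i, i) = 0`, so that
`hlsConv lam f i = ∑' j, κ(i, j) f(j)`. -/
def rieszKer {N : ℕ} (lam : ℝ) (i j : ZN N) : ℝ := if j = i then 0 else 1 / eudist i j ^ lam

/-- The standing assumptions on the exponents. -/
structure Params (N : ℕ) (r s t lam : ℝ) : Prop where
  hr : 1 < r
  hs : 1 < s
  hlam0 : 0 < lam
  hlamN : lam < (N : ℝ)
  hsup : 1 / r + 1 / s + lam / (N : ℝ) > 2
  ht1 : 1 < t
  hts : 1 / t + 1 / s = 1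

theorem Params.N_pos {N : ℕ} {r s t lam : ℝ} (h : Params N r s t lam) : 0 < N := by
  have := h.hlam0.trans h.hlamN
  exact_mod_cast this

theorem hlsConv_eq {N : ℕ} (lam : ℝ) (f : ZN N → ℝ) (i : ZN N) :
    hlsConv lam f i = ∑' j, rieszKer lam i j * f j := by
  unfold hlsConv rieszKer
  congr 1; ext j
  split_ifs <;> simp [div_eq_mul_inv, mul_comm]

theorem eudist_nonneg {N : ℕ} (i j : ZN N) : 0 ≤ eudist i j := Real.sqrt_nonneg _

theorem eudist_comm {N : ℕ} (i j : ZN N) : eudist i j = eudist j i := by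
  unfold eudist
  congr 1
  exact Finset.sum_congr rfl fun k _ => by ring

theorem eudist_pos {N : ℕ} {i j : ZN N} (h : j ≠ i) : 0 < eudist i j := by
  obtain ⟨k, hk⟩ := Function.ne_iff.1 h
  refine Real.sqrt_pos.2 (Finset.sum_pos' (fun _ _ => sq_nonneg _) ⟨k, Finset.mem_univ _, ?_⟩)
  have : ((i k : ℝ) - j k) ≠ 0 := by
    rw [sub_ne_zero]; exact_mod_cast Ne.symm hk
  positivity

theorem ker_nonneg {N : ℕ} (lam : ℝ) (i j : ZN N) : 0 ≤ rieszKer lam i j := by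
  unfold rieszKer
  split_ifs
  · exact le_rfl
  · have := eudist_nonneg i j
    positivity

theorem ker_pos {N : ℕ} (lam : ℝ) {i j : ZN N} (h : j ≠ i) : 0 < rieszKer lam i j := by
  unfold rieszKer
  rw [if_neg h]
  have := eudist_pos h
  positivity

theorem ker_comm {N : ℕ} (lam : ℝ) (i j : ZN N) : rieszKer lam i j = rieszKer lam j i := by
  unfold rieszKer
  simp only [eudist_comm i j, eq_comm]

theorem ker_add {N : ℕ} (lam : ℝ) (i j a : ZN N) :
    rieszKer lam (i + a) (j + a) = rieszKer lam i j := by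
  unfold rieszKer eudist
  simp

theorem summable_ker_rpow {N : ℕ} {lam q : ℝ} (hq : 0 < q) (h : (N : ℝ) < lam * q) :
    Summable fun z : ZN N => rieszKer lam 0 z ^ q := by
  classical
  let b := (EuclideanSpace.basisFun (Fin N) ℝ).toBasis
  let L : Submodule ℤ (EuclideanSpace ℝ (Fin N)) := Submodule.span ℤ (Set.range b)
  have hrank : Module.finrank ℤ L = N := by
    have := ZLattice.rank ℝ L
    simpa using this
  have hmem : ∀ z : ZN N, (WithLp.toLp 2 (fun k => (z k : ℝ)) : EuclideanSpace ℝ (Fin N)) ∈ L := by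
    intro z
    refine (b.mem_span_iff_repr_mem ℤ _).2 fun i => ⟨z i, ?_⟩
    simp [b]
  let φ : ZN N → L := fun z => ⟨_, hmem z⟩
  have hφ : Function.Injective φ := by
    intro z w hzw
    ext k
    have := congrArg (fun v : L => (v : EuclideanSpace ℝ (Fin N)) k) hzw
    simpa [φ] using this
  have hsum : Summable fun z : L => ‖z‖ ^ (-(lam * q)) :=
    ZLattice.summable_norm_rpow L _ (by rw [hrank]; linarith)
  refine (hsum.comp_injective hφ).of_nonneg_of_le
    (fun z => Real.rpow_nonneg (ker_nonneg _ _ _) _) fun z => ?_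
  have hn : eudist 0 z = ‖φ z‖ := by
    simp [eudist, φ, EuclideanSpace.norm_eq]
  unfold rieszKer
  split_ifs with hz
  · rw [Real.zero_rpow hq.ne']
    exact Real.rpow_nonneg (norm_nonneg _) _
  · simp only [Function.comp, ← hn]
    have := eudist_pos hz
    rw [one_div, ← Real.rpow_neg this.le, ← Real.rpow_mul this.le, neg_mul]

theorem summable_ker_row {N : ℕ} {lam q : ℝ} (hq : 0 < q) (h : (N : ℝ) < lam * q) (i : ZN N) :
    Summable fun z : ZN N => rieszKer lam i z ^ q := by
  refine ((Equiv.addRight i).summable_iff).1 ((summable_ker_rpow hq h).congr fun z => ?_)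
  simp only [Function.comp, Equiv.coe_addRight]
  have := ker_add lam 0 z i
  rw [zero_add] at this
  rw [this]

/-! ### Young's convolution inequality -/

/-- `f(i) g(j) κ(i, j)` as a function on pairs. -/
def term {N : ℕ} (lam : ℝ) (f g : ZN N → ℝ) (p : ZN N × ZN N) : ℝ :=
  f p.1 * g p.2 * rieszKer lam p.1 p.2

/-- The weighted arithmetic-geometric inequality behind Young's convolution inequality. -/
theorem young_pointwise {p s q a b c : ℝ} (hp : 1 ≤ p) (hs : 1 ≤ s) (hq : 1 ≤ q)
    (h : 1 / p + 1 / s + 1 / q = 2) (ha : 0 ≤ a) (hb : 0 ≤ b) (hc : 0 ≤ c) :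
    a * b * c ≤ (1 - 1 / q) * (a ^ p * b ^ s) + (1 - 1 / p) * (b ^ s * c ^ q)
      + (1 - 1 / s) * (a ^ p * c ^ q) := by
  have h1 : ∀ x : ℝ, 1 ≤ x → 0 ≤ 1 - 1 / x := fun x hx => by
    have : 1 / x ≤ 1 := by rw [div_le_one (by linarith)]; exact hx
    linarith
  have key := Real.geom_mean_le_arith_mean3_weighted (h1 q hq) (h1 p hp) (h1 s hs)
    (p₁ := a ^ p * b ^ s) (p₂ := b ^ s * c ^ q) (p₃ := a ^ p * c ^ q)
    (by positivity) (by positivity) (by positivity) (by linarith)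
  refine le_trans (le_of_eq ?_) key
  have e : ∀ x m u v : ℝ, 0 ≤ x → 1 ≤ m → 0 ≤ u → 0 ≤ v → u + v = 1 / m →
      (x ^ m) ^ u * (x ^ m) ^ v = x := by
    intro x m u v hx hm hu hv huv
    rw [← Real.rpow_add_of_nonneg (by positivity) hu hv, ← Real.rpow_mul hx, huv,
      mul_one_div_cancel (by linarith), Real.rpow_one]
  rw [Real.mul_rpow (by positivity) (by positivity), Real.mul_rpow (by positivity) (by positivity),
    Real.mul_rpow (by positivity) (by positivity)]
  conv_lhs => rw [← e a p _ _ ha hp (h1 q hq) (h1 s hs) (by linarith),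
    ← e b s _ _ hb hs (h1 q hq) (h1 p hp) (by linarith),
    ← e c q _ _ hc hq (h1 p hp) (h1 s hs) (by linarith)]
  ring

/-- Shear of pairs turning `κ(i, j)`, a function of the difference, into a function of one
variable. -/
def shear (N : ℕ) : ZN N × ZN N ≃ ZN N × ZN N where
  toFun p := (p.1, p.2 - p.1)
  invFun p := (p.1, p.2 + p.1)
  left_inv p := by simp
  right_inv p := by simp

theorem hasSum_mul_ker {N : ℕ} {lam q : ℝ} {F : ZN N → ℝ} (hF : Summable F) (hF0 : ∀ i, 0 ≤ F i)
    (hk : Summable fun z : ZN N => rieszKer lam 0 z ^ q) :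
    HasSum (fun p : ZN N × ZN N => F p.1 * rieszKer lam p.1 p.2 ^ q)
      ((∑' i, F i) * ∑' z : ZN N, rieszKer lam 0 z ^ q) := by
  have hs := hF.mul_of_nonneg hk hF0 (fun z => Real.rpow_nonneg (ker_nonneg _ _ _) _)
  have e : (fun p : ZN N × ZN N => F p.1 * rieszKer lam p.1 p.2 ^ q) =
      (fun x : ZN N × ZN N => F x.1 * rieszKer lam 0 x.2 ^ q) ∘ shear N := by
    ext p
    have := ker_add lam 0 (p.2 - p.1) p.1
    rw [zero_add, sub_add_cancel] at this
    simp [shear, this]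
  rw [e]
  exact (shear N).hasSum_iff.2 (hF.hasSum.mul hk.hasSum hs)

/-- Young's convolution inequality in trilinear form, on the unit balls. -/
theorem young {N : ℕ} {lam p s q : ℝ} (hp : 1 ≤ p) (hs : 1 ≤ s) (hq : 1 ≤ q)
    (h : 1 / p + 1 / s + 1 / q = 2)
    (hk : Summable fun z : ZN N => rieszKer lam 0 z ^ q)
    {f g : ZN N → ℝ} (hf0 : ∀ i, 0 ≤ f i) (hg0 : ∀ i, 0 ≤ g i)
    (hf : Summable fun i => f i ^ p) (hg : Summable fun i => g i ^ s)
    (hf1 : ∑' i, f i ^ p ≤ 1) (hg1 : ∑' i, g i ^ s ≤ 1) :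
    Summable (term lam f g) ∧
      ∑' x, term lam f g x ≤ 1 + 2 * ∑' z : ZN N, rieszKer lam 0 z ^ q := by
  have hfp : ∀ i, 0 ≤ f i ^ p := fun i => Real.rpow_nonneg (hf0 i) _
  have hgp : ∀ i, 0 ≤ g i ^ s := fun i => Real.rpow_nonneg (hg0 i) _
  have A1 := hf.hasSum.mul hg.hasSum (hf.mul_of_nonneg hg hfp hgp)
  have A2 := hasSum_mul_ker hg hgp hk
  rw [← (Equiv.prodComm _ _).hasSum_iff] at A2
  have A3 := hasSum_mul_ker hf hfp hk
  have A := ((A1.mul_left (1 - 1 / q)).add (A2.mul_left (1 - 1 / p))).add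
    (A3.mul_left (1 - 1 / s))
  have hle : ∀ x : ZN N × ZN N, term lam f g x ≤ _ := fun x =>
    young_pointwise hp hs hq h (hf0 x.1) (hg0 x.2) (ker_nonneg lam x.1 x.2)
  have h0 : ∀ x : ZN N × ZN N, 0 ≤ term lam f g x := fun x =>
    mul_nonneg (mul_nonneg (hf0 _) (hg0 _)) (ker_nonneg _ _ _)
  have hsum : Summable (term lam f g) := by
    refine A.summable.of_nonneg_of_le h0 fun x => (hle x).trans (le_of_eq ?_)
    simp [ker_comm lam x.2 x.1]
  refine ⟨hsum, ?_⟩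
  have hT := hasSum_le (fun x => (hle x).trans (le_of_eq
    (by simp [ker_comm lam x.2 x.1]))) hsum.hasSum A
  refine hT.trans ?_
  have w : ∀ x : ℝ, 1 ≤ x → 0 ≤ 1 - 1 / x ∧ 1 - 1 / x ≤ 1 := fun x hx => by
    have : 1 / x ≤ 1 := by rw [div_le_one (by linarith)]; exact hx
    have : 0 ≤ 1 / x := by positivity
    constructor <;> linarith
  have hk0 : 0 ≤ ∑' z : ZN N, rieszKer lam 0 z ^ q :=
    tsum_nonneg fun z => Real.rpow_nonneg (ker_nonneg _ _ _) _
  have f0 : 0 ≤ ∑' i, f i ^ p := tsum_nonneg hfp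
  have g0 : 0 ≤ ∑' i, g i ^ s := tsum_nonneg hgp
  set Fs := ∑' i, f i ^ p
  set Gs := ∑' i, g i ^ s
  set Ks := ∑' z : ZN N, rieszKer lam 0 z ^ q
  have b1 : (1 - 1 / q) * (Fs * Gs) ≤ 1 :=
    mul_le_one₀ (w q hq).2 (by positivity) (mul_le_one₀ hf1 g0 hg1)
  have b2 : (1 - 1 / p) * (Gs * Ks) ≤ Ks := by
    rw [← mul_assoc]
    exact mul_le_of_le_one_left hk0 (mul_le_one₀ (w p hp).2 g0 hg1)
  have b3 : (1 - 1 / s) * (Fs * Ks) ≤ Ks := by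
    rw [← mul_assoc]
    exact mul_le_of_le_one_left hk0 (mul_le_one₀ (w s hs).2 f0 hf1)
  linarith

/-! ### Power sums and the bilinear form -/

/-- The power sum `‖f‖_r^r`. -/
def powSum {N : ℕ} (r : ℝ) (f : ZN N → ℝ) : ℝ := ∑' i, |f i| ^ r

/-- The bilinear form `∑_{i ≠ j} f(i) g(j) / |i - j|^λ`. -/
def bil {N : ℕ} (lam : ℝ) (f g : ZN N → ℝ) : ℝ := ∑' p, term lam f g p

theorem lpNorm_eq {N : ℕ} (r : ℝ) (f : ZN N → ℝ) : lpNorm r f = powSum r f ^ (1 / r) := rfl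

theorem powSum_nonneg {N : ℕ} (r : ℝ) (f : ZN N → ℝ) : 0 ≤ powSum r f :=
  tsum_nonneg fun _ => Real.rpow_nonneg (abs_nonneg _) _

theorem lpNorm_nonneg {N : ℕ} (r : ℝ) (f : ZN N → ℝ) : 0 ≤ lpNorm r f :=
  Real.rpow_nonneg (powSum_nonneg r f) _

theorem lpNorm_rpow {N : ℕ} {r : ℝ} (hr : 0 < r) (f : ZN N → ℝ) : lpNorm r f ^ r = powSum r f := by
  rw [lpNorm_eq, ← Real.rpow_mul (powSum_nonneg r f), one_div_mul_cancel hr.ne', Real.rpow_one]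

theorem lpNorm_eq_one_iff {N : ℕ} {r : ℝ} (hr : 0 < r) (f : ZN N → ℝ) :
    lpNorm r f = 1 ↔ powSum r f = 1 := by
  constructor
  · intro h; rw [← lpNorm_rpow hr, h, Real.one_rpow]
  · intro h; rw [lpNorm_eq, h, Real.one_rpow]

theorem lpNorm_le_one {N : ℕ} {r : ℝ} (hr : 0 < r) {f : ZN N → ℝ} (h : powSum r f ≤ 1) :
    lpNorm r f ≤ 1 := Real.rpow_le_one (powSum_nonneg r f) h (by positivity)

theorem Memlp.const_mul {N : ℕ} {r : ℝ} {f : ZN N → ℝ} (hf : Memlp r f) (c : ℝ) :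
    Memlp r fun i => c * f i := by
  refine (Summable.mul_left (|c| ^ r) hf).congr fun i => ?_
  rw [abs_mul, Real.mul_rpow (abs_nonneg _) (abs_nonneg _)]

theorem powSum_const_mul {N : ℕ} (r : ℝ) (f : ZN N → ℝ) (c : ℝ) :
    powSum r (fun i => c * f i) = |c| ^ r * powSum r f := by
  unfold powSum
  rw [← tsum_mul_left]
  congr 1; ext i
  rw [abs_mul, Real.mul_rpow (abs_nonneg _) (abs_nonneg _)]

theorem rpow_le_powSum {N : ℕ} {r : ℝ} {f : ZN N → ℝ} (hf : Memlp r f) (i : ZN N) :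
    |f i| ^ r ≤ powSum r f :=
  hf.le_tsum i fun _ _ => Real.rpow_nonneg (abs_nonneg _) _

theorem abs_le_one {N : ℕ} {r : ℝ} (hr : 0 < r) {f : ZN N → ℝ} (hf : Memlp r f)
    (h1 : powSum r f ≤ 1) (i : ZN N) : |f i| ≤ 1 := by
  by_contra! h
  have := Real.one_lt_rpow h hr
  linarith [rpow_le_powSum hf i]

/-- `f = ‖f‖_r f'` with `f'` in the unit ball of `ℓ^r`, and on the unit sphere unless `f = 0`. -/
theorem exists_normalized {N : ℕ} {r : ℝ} (hr : 0 < r) {f : ZN N → ℝ} (hf : Memlp r f) :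
    ∃ f' : ZN N → ℝ, Memlp r f' ∧ powSum r f' ≤ 1 ∧ (0 < lpNorm r f → powSum r f' = 1) ∧
      f = fun i => lpNorm r f * f' i := by
  refine ⟨fun i => (lpNorm r f)⁻¹ * f i, hf.const_mul _, ?_⟩
  rcases (lpNorm_nonneg r f).eq_or_lt with h | h
  · have hS : powSum r f = 0 := by rw [← lpNorm_rpow hr, ← h, Real.zero_rpow hr.ne']
    refine ⟨by rw [powSum_const_mul, hS]; simp, fun h' => absurd h' (by rw [← h]; simp), ?_⟩
    ext i
    have h1 := rpow_le_powSum hf i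
    rw [hS] at h1
    have h2 : |f i| ^ r = 0 := le_antisymm h1 (Real.rpow_nonneg (abs_nonneg _) _)
    have h3 := ((Real.rpow_eq_zero_iff_of_nonneg (abs_nonneg _)).1 h2).1
    rw [← h, zero_mul]
    exact abs_eq_zero.1 h3
  · have hS : powSum r (fun i => (lpNorm r f)⁻¹ * f i) = 1 := by
      rw [powSum_const_mul, abs_of_pos (inv_pos.2 h), Real.inv_rpow h.le, lpNorm_rpow hr]
      have : 0 < powSum r f := by rw [← lpNorm_rpow hr]; positivity
      exact inv_mul_cancel₀ this.ne'
    refine ⟨hS.le, fun _ => hS, ?_⟩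
    ext i
    rw [← mul_assoc, mul_inv_cancel₀ h.ne', one_mul]

theorem term_swap {N : ℕ} (lam : ℝ) (f g : ZN N → ℝ) (p : ZN N × ZN N) :
    term lam g f p.swap = term lam f g p := by
  simp only [term, Prod.fst_swap, Prod.snd_swap, ker_comm lam p.2 p.1]
  ring

theorem bil_comm {N : ℕ} (lam : ℝ) (f g : ZN N → ℝ) : bil lam f g = bil lam g f := by
  unfold bil
  rw [← (Equiv.prodComm (ZN N) (ZN N)).tsum_eq (term lam g f)]
  exact tsum_congr fun p => (term_swap lam f g p).symm

theorem bil_mul_left {N : ℕ} (lam c : ℝ) (f g : ZN N → ℝ) :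
    bil lam (fun i => c * f i) g = c * bil lam f g := by
  unfold bil
  rw [← tsum_mul_left]
  exact tsum_congr fun p => by simp only [term]; ring

theorem bil_mul_right {N : ℕ} (lam c : ℝ) (f g : ZN N → ℝ) :
    bil lam f (fun i => c * g i) = c * bil lam f g := by
  rw [bil_comm, bil_mul_left, bil_comm]

/-! ### Bounds for the form and the convolution -/

namespace Params

variable {N : ℕ} {r s t lam : ℝ}

/-- The hypotheses are symmetric in `r` and `s`, with `t` replaced by the conjugate exponent
`r / (r - 1)` of `r`. -/
theorem swap (h : Params N r s t lam) : Params N s r (r / (r - 1)) lam where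
  hr := h.hs
  hs := h.hr
  hlam0 := h.hlam0
  hlamN := h.hlamN
  hsup := by linarith [h.hsup]
  ht1 := by rw [one_lt_div] <;> linarith [h.hr]
  hts := by
    have := h.hr
    have : r - 1 ≠ 0 := by linarith
    have : r ≠ 0 := by linarith
    field_simp
    ring

theorem conj (h : Params N r s t lam) : t.HolderConjugate s :=
  Real.holderConjugate_iff.2 ⟨h.ht1, by simpa using h.hts⟩

/-- The condition `N < λ t`, which makes every row of the kernel belong to `ℓ^t`. -/
theorem lt_lam_mul (h : Params N r s t lam) : (N : ℝ) < lam * t := by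
  have hN : (0 : ℝ) < N := by exact_mod_cast h.N_pos
  have ht := h.ht1
  have h1 : 1 / r < 1 := by rw [div_lt_one] <;> linarith [h.hr]
  have h2 : 1 / t < lam / N := by linarith [h.hts, h.hsup]
  rw [div_lt_div_iff₀ (by linarith) hN] at h2
  linarith

/-- Since the exponents are strictly supercritical, the form is still bounded after raising the
exponent of `f` slightly; interpolating against the sup norm of `f` gains a power of `sup |f|`. -/
theorem exists_bound (h : Params N r s t lam) :
    ∃ C : ℝ, 0 < C ∧ ∃ θ : ℝ, 0 < θ ∧ ∀ (f g : ZN N → ℝ) (m : ℝ), 0 < m → (∀ i, |f i| ≤ m) →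
      Memlp r f → Memlp s g → powSum r f ≤ 1 → powSum s g ≤ 1 →
      Summable (term lam (fun i => |f i|) (fun i => |g i|)) ∧
      bil lam (fun i => |f i|) (fun i => |g i|) ≤ C * m ^ θ := by
  have hr := h.hr
  have hs := h.hs
  have hN : (0 : ℝ) < N := by exact_mod_cast h.N_pos
  have hlN : lam / N < 1 := by rw [div_lt_one hN]; exact h.hlamN
  have hr1 : 1 / r < 1 := by rw [div_lt_one] <;> linarith
  have hs1 : 1 / s < 1 := by rw [div_lt_one] <;> linarith
  have hsup := h.hsup
  obtain ⟨x, hx1, hx2⟩ := exists_between (show 2 - 1 / s - lam / N < 1 / r by linarith)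
  have hx0 : 0 < x := by linarith
  have hrp : r < 1 / x := (lt_one_div hx0 (by linarith)).1 hx2
  set p := 1 / x with hp
  have hpx : 1 / p = x := by rw [hp, one_div_one_div]
  have hp1 : 1 < p := by linarith
  have hy0 : 0 < 2 - x - 1 / s := by linarith
  have hy1 : 2 - x - 1 / s < lam / N := by linarith
  set q := 1 / (2 - x - 1 / s) with hq
  have hqx : 1 / q = 2 - x - 1 / s := by rw [hq, one_div_one_div]
  have hq1 : 1 < q := by rw [hq, one_lt_div hy0]; linarith
  have hk : Summable fun z : ZN N => rieszKer lam 0 z ^ q := by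
    refine summable_ker_rpow (by linarith) ?_
    rw [hq, mul_one_div, lt_div_iff₀ hy0]
    rw [lt_div_iff₀ hN] at hy1
    linarith
  refine ⟨1 + 2 * ∑' z : ZN N, rieszKer lam 0 z ^ q, ?_, (p - r) / p,
    div_pos (by linarith) (by linarith), ?_⟩
  · have : 0 ≤ ∑' z : ZN N, rieszKer lam 0 z ^ q :=
      tsum_nonneg fun z => Real.rpow_nonneg (ker_nonneg _ _ _) _
    linarith
  intro f g m hm hfm hf hg hf1 hg1
  have hμ : 0 < m ^ ((p - r) / p) := Real.rpow_pos_of_pos hm _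
  have hμp : (m ^ ((p - r) / p)) ^ p = m ^ (p - r) := by
    rw [← Real.rpow_mul hm.le, div_mul_cancel₀ _ (by linarith)]
  set μ := m ^ ((p - r) / p)
  have hF : ∀ i, (|f i| / μ) ^ p ≤ |f i| ^ r := by
    intro i
    rw [Real.div_rpow (abs_nonneg _) hμ.le, hμp, div_le_iff₀ (Real.rpow_pos_of_pos hm _)]
    calc |f i| ^ p = |f i| ^ r * |f i| ^ (p - r) := by
          rw [← Real.rpow_add_of_nonneg (abs_nonneg _) (by linarith) (by linarith)]
          congr 1; ring
      _ ≤ _ := by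
          exact mul_le_mul_of_nonneg_left
            (Real.rpow_le_rpow (abs_nonneg _) (hfm i) (by linarith))
            (Real.rpow_nonneg (abs_nonneg _) _)
  have hF0 : ∀ i, 0 ≤ |f i| / μ := fun i => by positivity
  have hFs : Summable fun i => (|f i| / μ) ^ p :=
    Summable.of_nonneg_of_le (fun i => Real.rpow_nonneg (hF0 i) _) hF hf
  obtain ⟨y1, y2⟩ := young (lam := lam) hp1.le hs.le hq1.le (by rw [hpx, hqx]; ring) hk hF0
    (fun i => abs_nonneg (g i)) hFs hg ((hFs.tsum_le_tsum hF hf).trans hf1) hg1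
  have e : ∀ x, term lam (fun i => |f i|) (fun i => |g i|) x =
      μ * term lam (fun i => |f i| / μ) (fun i => |g i|) x := by
    intro x
    simp only [term]
    field_simp
  refine ⟨(y1.mul_left μ).congr fun x => (e x).symm, ?_⟩
  unfold bil
  rw [tsum_congr e, tsum_mul_left, mul_comm]
  gcongr

theorem summable_term (h : Params N r s t lam) {f g : ZN N → ℝ} (hf : Memlp r f)
    (hg : Memlp s g) : Summable (term lam f g) := by
  have hr : 0 < r := by linarith [h.hr]
  obtain ⟨C, -, θ, -, hC⟩ := h.exists_bound
  obtain ⟨f', hf', hf1, -, ef⟩ := exists_normalized hr hf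
  obtain ⟨g', hg', hg1, -, eg⟩ := exists_normalized (by linarith [h.hs]) hg
  have := (hC f' g' 1 one_pos (abs_le_one hr hf' hf1) hf' hg' hf1 hg1).1
  have h2 : Summable (term lam f' g') := by
    refine Summable.of_norm (this.congr fun x => ?_)
    simp only [term, Real.norm_eq_abs, abs_mul, abs_of_nonneg (ker_nonneg _ _ _)]
  refine (h2.mul_left (lpNorm r f * lpNorm s g)).congr fun x => ?_
  conv_rhs => rw [ef, eg]
  simp only [term]
  ring

/-- Hölder's inequality for one row of the kernel outside a finite set. -/
theorem row_aux (h : Params N r s t lam) {g : ZN N → ℝ} (hg : Memlp s g) (i : ZN N)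
    (T : Finset (ZN N)) :
    (Summable fun j : {j // j ∉ T} => rieszKer lam i j * |g j|) ∧
    ∑' j : {j // j ∉ T}, rieszKer lam i j * |g j| ≤
      (∑' j : {j // j ∉ T}, rieszKer lam i j ^ t) ^ (1 / t) * lpNorm s g := by
  have ht := h.ht1
  have hs := h.hs
  have hk := summable_ker_row (by linarith) h.lt_lam_mul i
  have := Real.summable_and_inner_le_Lp_mul_Lq_tsum_of_nonneg h.conj
    (f := fun j : {j // j ∉ T} => rieszKer lam i j) (g := fun j : {j // j ∉ T} => |g j|)
    (fun j => ker_nonneg _ _ _) (fun j => abs_nonneg _)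
    (hk.comp_injective Subtype.val_injective) (hg.comp_injective Subtype.val_injective)
  refine ⟨this.1, this.2.trans ?_⟩
  refine mul_le_mul_of_nonneg_left ?_
    (Real.rpow_nonneg (tsum_nonneg fun j => Real.rpow_nonneg (ker_nonneg _ _ _) _) _)
  refine Real.rpow_le_rpow (tsum_nonneg fun j => Real.rpow_nonneg (abs_nonneg _) _) ?_
    (by positivity)
  exact Summable.tsum_subtype_le _ {j | j ∉ T} (fun j => Real.rpow_nonneg (abs_nonneg _) _) hg

theorem summable_row (h : Params N r s t lam) {g : ZN N → ℝ} (hg : Memlp s g) (i : ZN N) :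
    Summable fun j => rieszKer lam i j * g j := by
  have h2 : Summable fun j => rieszKer lam i j * |g j| :=
    (Finset.summable_compl_iff ∅).1 (h.row_aux hg i ∅).1
  refine Summable.of_norm (h2.congr fun j => ?_)
  rw [Real.norm_eq_abs, abs_mul, abs_of_nonneg (ker_nonneg _ _ _)]

/-- Truncation of the convolution to a finite set, with an error uniform in the unit ball of `ℓ^s`. -/
theorem row_tail (h : Params N r s t lam) {g : ZN N → ℝ} (hg : Memlp s g) (hg1 : powSum s g ≤ 1)
    (i : ZN N) (T : Finset (ZN N)) :
    |hlsConv lam g i - ∑ j ∈ T, rieszKer lam i j * g j| ≤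
      (∑' j : {j // j ∉ T}, rieszKer lam i j ^ t) ^ (1 / t) := by
  have hs := h.hs
  rw [hlsConv_eq, ← (h.summable_row hg i).sum_add_tsum_subtype_compl T, add_sub_cancel_left]
  obtain ⟨h1, h2⟩ := h.row_aux hg i T
  have e : ∀ j : {j // j ∉ T}, ‖rieszKer lam i j * g j‖ = rieszKer lam i j * |g j| := fun j => by
    rw [Real.norm_eq_abs, abs_mul, abs_of_nonneg (ker_nonneg _ _ _)]
  rw [← Real.norm_eq_abs]
  refine (norm_tsum_le_tsum_norm (h1.congr fun j => (e j).symm)).trans ?_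
  rw [tsum_congr e]
  refine h2.trans (mul_le_of_le_one_right ?_ (lpNorm_le_one (by linarith) hg1))
  exact Real.rpow_nonneg (tsum_nonneg fun j => Real.rpow_nonneg (ker_nonneg _ _ _) _) _

/-- Pointwise convergence inside the unit ball of `ℓ^s` gives convergence of every value of the
convolution, because the rows of the kernel lie in the dual space `ℓ^t`. -/
theorem tendsto_conv (h : Params N r s t lam) {G : ℕ → ZN N → ℝ} {g : ZN N → ℝ}
    (hG : ∀ n, Memlp s (G n)) (hG1 : ∀ n, powSum s (G n) ≤ 1) (hg : Memlp s g)
    (hg1 : powSum s g ≤ 1) (hlim : ∀ j, Tendsto (fun n => G n j) atTop (𝓝 (g j))) (i : ZN N) :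
    Tendsto (fun n => hlsConv lam (G n) i) atTop (𝓝 (hlsConv lam g i)) := by
  have ht := h.ht1
  have h0 : Tendsto (fun T : Finset (ZN N) =>
      (∑' j : {j // j ∉ T}, rieszKer lam i j ^ t) ^ (1 / t)) atTop (𝓝 0) := by
    have := (tendsto_tsum_compl_atTop_zero fun j => rieszKer lam i j ^ t).rpow_const
      (p := 1 / t) (Or.inr (by positivity))
    rwa [Real.zero_rpow (by positivity)] at this
  refine Metric.tendsto_atTop'.2 fun ε hε => ?_
  obtain ⟨T, hT⟩ := (h0.eventually_lt_const (show 0 < ε / 3 by positivity)).exists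
  have hfin : Tendsto (fun n => ∑ j ∈ T, rieszKer lam i j * G n j) atTop
      (𝓝 (∑ j ∈ T, rieszKer lam i j * g j)) :=
    tendsto_finsetSum _ fun j _ => (hlim j).const_mul _
  obtain ⟨n₀, hn₀⟩ := Metric.tendsto_atTop'.1 hfin (ε / 3) (by positivity)
  refine ⟨n₀, fun n hn => ?_⟩
  have a1 := h.row_tail (hG n) (hG1 n) i T
  have a2 := h.row_tail hg hg1 i T
  have a3 := hn₀ n hn
  rw [Real.dist_eq] at a3 ⊢
  rw [abs_le] at a1 a2
  rw [abs_lt] at a3 ⊢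
  constructor <;> linarith

theorem hasSum_bil (h : Params N r s t lam) {f g : ZN N → ℝ} (hf : Memlp r f) (hg : Memlp s g) :
    HasSum (fun i => f i * hlsConv lam g i) (bil lam f g) := by
  refine (h.summable_term hf hg).hasSum.prod_fiberwise fun i => ?_
  rw [hlsConv_eq]
  have e : (fun j => term lam f g (i, j)) = fun j => f i * (rieszKer lam i j * g j) := by
    ext j
    simp only [term]
    ring
  rw [e]
  exact (h.summable_row hg i).hasSum.mul_left (f i)

theorem hasSum_bil' (h : Params N r s t lam) {f g : ZN N → ℝ} (hf : Memlp r f)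
    (hg : Memlp s g) : HasSum (fun j => g j * hlsConv lam f j) (bil lam f g) := by
  rw [bil_comm]
  exact h.swap.hasSum_bil hg hf

/-- For `f` in the unit ball of `ℓ^r`, the form is bounded by a constant multiple of `‖g‖_s`. -/
theorem exists_bil_le (h : Params N r s t lam) :
    ∃ C : ℝ, 0 < C ∧ ∀ f g : ZN N → ℝ, Memlp r f → Memlp s g → powSum r f ≤ 1 →
      bil lam f g ≤ C * lpNorm s g := by
  obtain ⟨C, hC0, θ, -, hC⟩ := h.exists_bound
  refine ⟨C, hC0, fun f g hf hg hf1 => ?_⟩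
  obtain ⟨g', hg', hg1, -, eg⟩ := exists_normalized (by linarith [h.hs]) hg
  obtain ⟨h1, h2⟩ := hC f g' 1 one_pos (abs_le_one (by linarith [h.hr]) hf hf1) hf hg' hf1 hg1
  rw [Real.one_rpow, mul_one] at h2
  have h3 : bil lam f g' ≤ bil lam (fun i => |f i|) (fun i => |g' i|) := by
    refine (h.summable_term hf hg').tsum_le_tsum (fun x => ?_) h1
    refine (le_abs_self _).trans (le_of_eq ?_)
    simp only [term, abs_mul, abs_of_nonneg (ker_nonneg _ _ _)]
  have e : bil lam f g = lpNorm s g * bil lam f g' := by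
    conv_lhs => rw [eg]
    exact bil_mul_right _ _ _ _
  rw [e, mul_comm C]
  exact mul_le_mul_of_nonneg_left (h3.trans h2) (lpNorm_nonneg _ _)

/-- The convolution maps the unit ball of `ℓ^r` into a ball of `ℓ^t`: test the form against
`sign(u) |u|^{t-1}`, `u = |i|^{-λ} ∗ f`, cut off to finite sets. -/
theorem exists_conv_le (h : Params N r s t lam) :
    ∃ C : ℝ, ∀ f : ZN N → ℝ, Memlp r f → powSum r f ≤ 1 →
      Memlp t (hlsConv lam f) ∧ lpNorm t (hlsConv lam f) ≤ C := by
  classical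
  have ht := h.ht1
  have hs := h.hs
  obtain ⟨C, hC0, hC⟩ := h.exists_bil_le
  have hts' : (t - 1) * s = t := by
    have := h.hts
    have : t ≠ 0 := by linarith
    have : s ≠ 0 := by linarith
    field_simp at *
    linarith
  refine ⟨C, fun f hf hf1 => ?_⟩
  set u := hlsConv lam f with hu
  have key : ∀ T : Finset (ZN N), ∑ i ∈ T, |u i| ^ t ≤ C ^ t := by
    intro T
    set A := ∑ i ∈ T, |u i| ^ t with hA
    have hA0 : 0 ≤ A := Finset.sum_nonneg fun i _ => Real.rpow_nonneg (abs_nonneg _) _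
    rcases hA0.eq_or_lt with hA0 | hA0
    · rw [← hA0]; positivity
    let g : ZN N → ℝ := fun i => if i ∈ T then SignType.sign (u i) * |u i| ^ (t - 1) else 0
    have hgs : ∀ i, |g i| ^ s = if i ∈ T then |u i| ^ t else 0 := by
      intro i
      simp only [g]
      split_ifs with hi
      · rcases eq_or_ne (u i) 0 with h0 | h0
        · rw [h0]; simp [Real.zero_rpow (show s ≠ 0 by linarith),
            Real.zero_rpow (show t ≠ 0 by linarith)]
        · have : |((SignType.sign (u i) : SignType) : ℝ)| = 1 := by
            rcases h0.lt_or_gt with h0 | h0 <;> simp [h0]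
          rw [abs_mul, this, one_mul, abs_of_nonneg (Real.rpow_nonneg (abs_nonneg _) _),
            ← Real.rpow_mul (abs_nonneg _), hts']
      · simp [Real.zero_rpow (show s ≠ 0 by linarith)]
    have hgsum : HasSum (fun i => |g i| ^ s) A := by
      have e : A = ∑ i ∈ T, |g i| ^ s :=
        Finset.sum_congr rfl fun i hi => by rw [hgs, if_pos hi]
      rw [e]
      exact hasSum_sum_of_ne_finset_zero fun i hi => by rw [hgs, if_neg hi]
    have hg : Memlp s g := hgsum.summable
    have hB : bil lam f g = A := by
      refine (h.hasSum_bil' hf hg).unique ?_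
      have e : A = ∑ i ∈ T, g i * u i := by
        refine Finset.sum_congr rfl fun i hi => ?_
        simp only [g, if_pos hi]
        rw [mul_right_comm, sign_mul_self, mul_comm]
        rcases eq_or_ne (u i) 0 with h0 | h0
        · simp [h0, Real.zero_rpow (show t ≠ 0 by linarith)]
        · rw [← Real.rpow_add_one (abs_ne_zero.2 h0), sub_add_cancel]
      rw [e]
      exact hasSum_sum_of_ne_finset_zero fun i hi => by simp [g, hi]
    have h1 := hC f g hf hg hf1
    rw [hB, lpNorm_eq, powSum, hgsum.tsum_eq] at h1
    -- `A ≤ C A^{1/s}` and `1 - 1/s = 1/t`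
    have h2 : A ^ (1 / t) ≤ C := by
      have e : A = A ^ (1 / t) * A ^ (1 / s) := by
        rw [← Real.rpow_add hA0, h.hts, Real.rpow_one]
      have h3 : 0 < A ^ (1 / s) := Real.rpow_pos_of_pos hA0 _
      refine le_of_mul_le_mul_right ?_ h3
      rw [← e]
      exact h1
    calc A = (A ^ (1 / t)) ^ t := by
          rw [← Real.rpow_mul hA0.le, one_div_mul_cancel (by linarith), Real.rpow_one]
      _ ≤ C ^ t := by gcongr
  have hnn : ∀ i, 0 ≤ |u i| ^ t := fun i => Real.rpow_nonneg (abs_nonneg _) _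
  have hsum : Memlp t u := summable_of_sum_le hnn key
  refine ⟨hsum, ?_⟩
  have h1 : powSum t u ≤ C ^ t := hsum.tsum_le_of_sum_le key
  calc lpNorm t u ≤ (C ^ t) ^ (1 / t) := Real.rpow_le_rpow (powSum_nonneg _ _) h1 (by positivity)
    _ = C := by rw [← Real.rpow_mul hC0.le, mul_one_div_cancel (by linarith), Real.rpow_one]

/-! ### The best constant -/

/-- The set of values `‖|i|^{-λ} ∗ f‖_t`, `‖f‖_r = 1`, whose supremum is the best constant `K`. -/
def ratioSet (_ : Params N r s t lam) : Set ℝ :=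
  {c : ℝ | ∃ f : ZN N → ℝ, Memlp r f ∧ lpNorm r f = 1 ∧ c = lpNorm t (hlsConv lam f)}

theorem bddAbove_ratioSet (h : Params N r s t lam) : BddAbove h.ratioSet := by
  obtain ⟨C, hC⟩ := h.exists_conv_le
  refine ⟨C, ?_⟩
  rintro c ⟨f, hf, hf1, rfl⟩
  exact (hC f hf ((lpNorm_eq_one_iff (by linarith [h.hr]) f).1 hf1).le).2

/-- The sharp Hölder-type bound: the supremum defining the best constant also bounds the form. -/
theorem bil_le (h : Params N r s t lam) {f g : ZN N → ℝ} (hf : Memlp r f) (hg : Memlp s g) :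
    bil lam f g ≤ sSup h.ratioSet * lpNorm r f * lpNorm s g := by
  have hr : 0 < r := by linarith [h.hr]
  obtain ⟨C, hC⟩ := h.exists_conv_le
  obtain ⟨f', hf', hf1, hf1', ef⟩ := exists_normalized hr hf
  have e : bil lam f g = lpNorm r f * bil lam f' g := by
    conv_lhs => rw [ef]
    exact bil_mul_left _ _ _ _
  rw [e]
  rcases (lpNorm_nonneg r f).eq_or_lt with h0 | h0
  · rw [← h0]; simp
  have hmem : lpNorm t (hlsConv lam f') ≤ sSup h.ratioSet :=
    le_csSup h.bddAbove_ratioSet ⟨f', hf', (lpNorm_eq_one_iff hr f').2 (hf1' h0), rfl⟩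
  have hHo := Real.summable_and_inner_le_Lp_mul_Lq_tsum_of_nonneg h.conj
    (f := fun j => |hlsConv lam f' j|) (g := fun j => |g j|)
    (fun j => abs_nonneg _) (fun j => abs_nonneg _) (hC f' hf' hf1).1 hg
  have h1 : bil lam f' g ≤ lpNorm t (hlsConv lam f') * lpNorm s g := by
    refine le_trans ?_ hHo.2
    refine hasSum_le (fun j => ?_) (h.hasSum_bil' hf' hg) hHo.1.hasSum
    rw [mul_comm, ← abs_mul]
    exact le_abs_self _
  calc lpNorm r f * bil lam f' g
      ≤ lpNorm r f * (sSup h.ratioSet * lpNorm s g) := by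
        refine mul_le_mul_of_nonneg_left (h1.trans ?_) h0.le
        exact mul_le_mul_of_nonneg_right hmem (lpNorm_nonneg _ _)
    _ = _ := by ring

end Params

/-! ### Translations, limits and the first-order condition -/

theorem shift_memlp {N : ℕ} {r : ℝ} {f : ZN N → ℝ} (hf : Memlp r f) (a : ZN N) :
    Memlp r fun i => f (i + a) :=
  (Equiv.addRight a).summable_iff.2 hf

theorem shift_powSum {N : ℕ} (r : ℝ) (f : ZN N → ℝ) (a : ZN N) :
    powSum r (fun i => f (i + a)) = powSum r f :=
  (Equiv.addRight a).tsum_eq fun i => |f i| ^ r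

theorem shift_bil {N : ℕ} (lam : ℝ) (f g : ZN N → ℝ) (a : ZN N) :
    bil lam (fun i => f (i + a)) (fun i => g (i + a)) = bil lam f g := by
  unfold bil
  rw [← ((Equiv.addRight a).prodCongr (Equiv.addRight a)).tsum_eq (term lam f g)]
  refine tsum_congr fun p => ?_
  simp [term, ker_add]

/-- Fatou's lemma for `ℓ^r`. -/
theorem memlp_of_tendsto {N : ℕ} {r : ℝ} (hr : 0 < r) {F : ℕ → ZN N → ℝ} {f : ZN N → ℝ}
    (hF : ∀ n, Memlp r (F n)) (hF1 : ∀ n, powSum r (F n) ≤ 1)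
    (hlim : ∀ i, Tendsto (fun n => F n i) atTop (𝓝 (f i))) : Memlp r f ∧ powSum r f ≤ 1 := by
  have key : ∀ T : Finset (ZN N), ∑ i ∈ T, |f i| ^ r ≤ 1 := by
    intro T
    have : Tendsto (fun n => ∑ i ∈ T, |F n i| ^ r) atTop (𝓝 (∑ i ∈ T, |f i| ^ r)) :=
      tendsto_finsetSum _ fun i _ => (hlim i).abs.rpow_const (Or.inr hr.le)
    refine le_of_tendsto' this fun n => le_trans ?_ (hF1 n)
    exact (hF n).sum_le_tsum T fun i _ => Real.rpow_nonneg (abs_nonneg _) _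
  have hs : Memlp r f := summable_of_sum_le (fun i => Real.rpow_nonneg (abs_nonneg _) _) key
  exact ⟨hs, hs.tsum_le_of_sum_le key⟩

/-- The hypothesis is an equality at `y = a`, so the derivatives of its two sides agree there. -/
theorem deriv_condition {r K a c : ℝ} (hr : 1 < r) (ha : 0 ≤ a)
    (hineq : ∀ y : ℝ, K + (y - a) * c ≤ K * (1 + |y| ^ r - a ^ r) ^ (1 / r)) :
    K * a ^ (r - 1) = c := by
  have hmin : IsLocalMin (fun y : ℝ => K * (1 + |y| ^ r - a ^ r) ^ (1 / r) - (y - a) * c) a := by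
    refine Eventually.of_forall fun y => ?_
    have := hineq y
    simp only [abs_of_nonneg ha, add_sub_cancel_right, Real.one_rpow, sub_self]
    linarith
  have h1 : HasDerivAt (fun y : ℝ => 1 + |y| ^ r - a ^ r) (r * |a| ^ (r - 2) * a) a :=
    ((hasDerivAt_abs_rpow a hr).const_add 1).sub_const _
  have hb : (1 + |a| ^ r - a ^ r) = 1 := by rw [abs_of_nonneg ha]; ring
  have h2 := ((h1.rpow_const (p := 1 / r) (Or.inl (by rw [hb]; norm_num))).const_mul K).sub
    (((hasDerivAt_id a).sub_const a).mul_const c)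
  have h3 := hmin.hasDerivAt_eq_zero h2
  rw [hb, Real.one_rpow] at h3
  have h4 : |a| ^ (r - 2) * a = a ^ (r - 1) := by
    rw [abs_of_nonneg ha]
    rcases ha.eq_or_lt with h0 | h0
    · rw [← h0, mul_zero, Real.zero_rpow (by linarith)]
    · rw [← Real.rpow_add_one h0.ne']; congr 1; ring
  have h5 : r * |a| ^ (r - 2) * a * (1 / r) = a ^ (r - 1) := by
    rw [← h4]; field_simp
  rw [h5] at h3
  linarith

/-! ### Maximizing pairs and the Euler–Lagrange system -/

namespace Params

variable {N : ℕ} {r s t lam : ℝ}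

theorem conv_nonneg {g : ZN N → ℝ} (hg : ∀ i, 0 ≤ g i) (i : ZN N) : 0 ≤ hlsConv lam g i := by
  rw [hlsConv_eq]
  exact tsum_nonneg fun j => mul_nonneg (ker_nonneg _ _ _) (hg j)

theorem conv_pos (h : Params N r s t lam) {g : ZN N → ℝ} (hg : Memlp s g) (hg0 : ∀ i, 0 ≤ g i)
    {i j : ZN N} (hij : j ≠ i) (hj : 0 < g j) : 0 < hlsConv lam g i := by
  rw [hlsConv_eq]
  exact (h.summable_row hg i).tsum_pos (fun j => mul_nonneg (ker_nonneg _ _ _) (hg0 j)) j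
    (mul_pos (ker_pos lam hij) hj)

theorem add_one_ne (h : Params N r s t lam) (i : ZN N) : i + 1 ≠ i := by
  intro e
  have := congrFun e ⟨0, h.N_pos⟩
  simp at this

theorem exists_pos_of_powSum {f : ZN N → ℝ} (hr : 0 < r) (hf0 : ∀ i, 0 ≤ f i)
    (hf1 : powSum r f = 1) : ∃ i, 0 < f i := by
  by_contra! hc
  have : ∀ i, f i = 0 := fun i => le_antisymm (hc i) (hf0 i)
  simp [powSum, this, Real.zero_rpow hr.ne'] at hf1

theorem lpNorm_conv_pos (h : Params N r s t lam) {f : ZN N → ℝ} (hf : Memlp r f)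
    (hf0 : ∀ i, 0 ≤ f i) (hf1 : powSum r f = 1) : 0 < lpNorm t (hlsConv lam f) := by
  obtain ⟨C, hC⟩ := h.exists_conv_le
  obtain ⟨j, hj⟩ := exists_pos_of_powSum (by linarith [h.hr]) hf0 hf1
  have h1 := h.swap.conv_pos hf hf0 (h.add_one_ne j).symm hj
  have h2 := rpow_le_powSum (hC f hf hf1.le).1 (j + 1)
  have h3 : 0 < |hlsConv lam f (j + 1)| ^ t := Real.rpow_pos_of_pos (abs_pos.2 h1.ne') _
  exact Real.rpow_pos_of_pos (h3.trans_le h2) _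

/-- Equality in Hölder's inequality: with `u = |i|^{-λ} ∗ f` and `M = ‖u‖_t`, the function
`g = (u / M)^{t - 1}` is a unit vector of `ℓ^s` and `B(f, g) = M`. -/
theorem exists_dual (h : Params N r s t lam) {f : ZN N → ℝ} (hf : Memlp r f)
    (hf0 : ∀ i, 0 ≤ f i) (hf1 : powSum r f = 1) :
    ∃ g : ZN N → ℝ, Memlp s g ∧ (∀ i, 0 ≤ g i) ∧ powSum s g = 1 ∧
      bil lam f g = lpNorm t (hlsConv lam f) := by
  have ht := h.ht1
  have hs := h.hs
  obtain ⟨C, hC⟩ := h.exists_conv_le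
  have hu := (hC f hf hf1.le).1
  have hM := h.lpNorm_conv_pos hf hf0 hf1
  have hMt := lpNorm_rpow (by linarith : 0 < t) (hlsConv lam f)
  have hu0 : ∀ i, 0 ≤ hlsConv lam f i := conv_nonneg hf0
  set u := hlsConv lam f with hu_def
  set M := lpNorm t u
  have hts' : (t - 1) * s = t := by
    have := h.hts
    have : t ≠ 0 := by linarith
    have : s ≠ 0 := by linarith
    field_simp at *
    linarith
  have hsum : HasSum (fun i => (u i) ^ t) (M ^ t) := by
    have e : (fun i => u i ^ t) = fun i => |u i| ^ t := by
      ext i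
      rw [abs_of_nonneg (hu0 i)]
    rw [hMt, e]
    exact Summable.hasSum hu
  have hsum1 : HasSum (fun i => (u i / M) ^ t) 1 := by
    have := hsum.div_const (M ^ t)
    rw [div_self (Real.rpow_pos_of_pos hM t).ne'] at this
    simpa only [Real.div_rpow (hu0 _) hM.le] using this
  have hg0 : ∀ i, 0 ≤ (u i / M) ^ (t - 1) := fun i =>
    Real.rpow_nonneg (div_nonneg (hu0 i) hM.le) _
  have hsum2 : HasSum (fun i => |(u i / M) ^ (t - 1)| ^ s) 1 := by
    simpa only [abs_of_nonneg (hg0 _), ← Real.rpow_mul (div_nonneg (hu0 _) hM.le), hts'] using hsum1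
  refine ⟨fun i => (u i / M) ^ (t - 1), hsum2.summable, hg0, hsum2.tsum_eq, ?_⟩
  refine (h.hasSum_bil' hf hsum2.summable).unique ?_
  have := hsum1.mul_left M
  rw [mul_one] at this
  have e : (fun j => (u j / M) ^ (t - 1) * u j) = fun j => M * (u j / M) ^ t := by
    ext j
    rcases (hu0 j).eq_or_lt with h0 | h0
    · simp [← h0, Real.zero_rpow (show t ≠ 0 by linarith)]
    · have h1 : 0 < u j / M := div_pos h0 hM
      conv_rhs => rw [show t = t - 1 + 1 by ring, Real.rpow_add_one h1.ne']
      field_simp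
  rw [← hu_def, e]
  exact this

theorem exists_unit (h : Params N r s t lam) : ∃ f : ZN N → ℝ, Memlp r f ∧
    (∀ i, 0 ≤ f i) ∧ powSum r f = 1 := by
  classical
  have hr := h.hr
  have e : ∀ i : ZN N, |(Pi.single 0 1 : ZN N → ℝ) i| ^ r = if i = 0 then 1 else 0 := by
    intro i
    rcases eq_or_ne i 0 with rfl | hi
    · simp
    · simp [hi, Real.zero_rpow (show r ≠ 0 by linarith)]
  have hs : HasSum (fun i : ZN N => |(Pi.single 0 1 : ZN N → ℝ) i| ^ r) 1 := by
    simp only [e]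
    exact hasSum_ite_eq 0 1
  refine ⟨Pi.single 0 1, hs.summable, fun i => ?_, hs.tsum_eq⟩
  rcases eq_or_ne i 0 with rfl | hi
  · simp
  · simp [hi]

theorem sSup_pos (h : Params N r s t lam) : 0 < sSup h.ratioSet := by
  obtain ⟨f, hf, hf0, hf1⟩ := h.exists_unit
  refine (h.lpNorm_conv_pos hf hf0 hf1).trans_le (le_csSup h.bddAbove_ratioSet ?_)
  exact ⟨f, hf, (lpNorm_eq_one_iff (by linarith [h.hr]) f).2 hf1, rfl⟩

/-- Nonnegative almost maximizing pairs, translated so that the first function does not vanish in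
the limit at the origin. -/
theorem exists_max_pair (h : Params N r s t lam) : ∃ m : ℝ, 0 < m ∧
    ∀ c < sSup h.ratioSet, sSup h.ratioSet / 2 < c → ∃ f g : ZN N → ℝ,
      Memlp r f ∧ Memlp s g ∧ (∀ i, 0 ≤ f i) ∧ (∀ i, 0 ≤ g i) ∧ powSum r f = 1 ∧
      powSum s g = 1 ∧ m ≤ f 0 ∧ c ≤ bil lam f g := by
  have hr := h.hr
  have ht := h.ht1
  have hK := h.sSup_pos
  obtain ⟨C, hC0, θ, hθ, hC⟩ := h.exists_bound
  obtain ⟨D, hD⟩ := h.exists_conv_le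
  set K := sSup h.ratioSet with hKdef
  refine ⟨(K / (2 * C)) ^ (1 / θ), by positivity, fun c hc hcK => ?_⟩
  have hne : h.ratioSet.Nonempty := by
    obtain ⟨f, hf, -, hf1⟩ := h.exists_unit
    exact ⟨_, f, hf, (lpNorm_eq_one_iff (by linarith) f).2 hf1, rfl⟩
  obtain ⟨_, ⟨f, hf, hf1, rfl⟩, hcf⟩ := exists_lt_of_lt_csSup hne hc
  have hf1' := (lpNorm_eq_one_iff (by linarith) f).1 hf1
  have hF : Memlp r fun i => |f i| := by simpa only [Memlp, abs_abs] using hf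
  have hF1 : powSum r (fun i => |f i|) = 1 := by simpa only [powSum, abs_abs] using hf1'
  obtain ⟨g, hg, hg0, hg1, hB⟩ := h.exists_dual hF (fun i => abs_nonneg _) hF1
  have hmono : lpNorm t (hlsConv lam f) ≤ lpNorm t (hlsConv lam fun i => |f i|) := by
    refine Real.rpow_le_rpow (powSum_nonneg _ _) ?_ (by positivity)
    refine (hD f hf hf1'.le).1.tsum_le_tsum (fun i => ?_) (hD _ hF hF1.le).1
    refine Real.rpow_le_rpow (abs_nonneg _) ?_ (by linarith)
    rw [abs_of_nonneg (conv_nonneg (fun i => abs_nonneg (f i)) i), hlsConv_eq, hlsConv_eq]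
    have e : ∀ j, ‖rieszKer lam i j * f j‖ = rieszKer lam i j * |f j| := fun j => by
      rw [Real.norm_eq_abs, abs_mul, abs_of_nonneg (ker_nonneg _ _ _)]
    rw [← Real.norm_eq_abs, ← tsum_congr e]
    exact norm_tsum_le_tsum_norm ((h.swap.summable_row hF i).congr fun j => (e j).symm)
  have hcB : c ≤ bil lam (fun i => |f i|) g := by rw [hB]; exact hcf.le.trans hmono
  -- were `|f|` everywhere below `m`, the form would be at most `C m ^ θ = K / 2`
  obtain ⟨a, ha⟩ : ∃ a, (K / (2 * C)) ^ (1 / θ) ≤ |f a| := by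
    by_contra! hcon
    have h1 := (hC f g _ (by positivity) (fun i => (hcon i).le) hf hg hf1'.le hg1.le).2
    rw [← Real.rpow_mul (by positivity), one_div_mul_cancel hθ.ne', Real.rpow_one] at h1
    simp only [abs_of_nonneg (hg0 _)] at h1
    have h2 : C * (K / (2 * C)) = K / 2 := by field_simp
    linarith
  refine ⟨fun i => |f (i + a)|, fun i => g (i + a), shift_memlp hF a, shift_memlp hg a,
    fun i => abs_nonneg _, fun i => hg0 _, ?_, ?_, by simpa using ha, ?_⟩
  · rw [shift_powSum r (fun i => |f i|) a]; exact hF1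
  · rw [shift_powSum]; exact hg1
  · rw [shift_bil lam (fun i => |f i|) g a]; exact hcB

/-- Pointwise limits of almost maximizing pairs satisfy the Euler–Lagrange equation: the bound
`bil lam v (G n) ≤ K ‖v‖_r`, tested on `v = F n` with one value replaced, passes to the limit. -/
theorem limit_equation (h : Params N r s t lam) {K : ℝ} {F G : ℕ → ZN N → ℝ} {i : ZN N} {a c : ℝ}
    (hF : ∀ n, Memlp r (F n)) (hG : ∀ n, Memlp s (G n)) (hF0 : ∀ n, 0 ≤ F n i)
    (hF1 : ∀ n, powSum r (F n) = 1)
    (hle : ∀ n v, Memlp r v → bil lam v (G n) ≤ K * lpNorm r v)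
    (hB : Tendsto (fun n => bil lam (F n) (G n)) atTop (𝓝 K))
    (ha : Tendsto (fun n => F n i) atTop (𝓝 a))
    (hc : Tendsto (fun n => hlsConv lam (G n) i) atTop (𝓝 c)) : K * a ^ (r - 1) = c := by
  classical
  have hr := h.hr
  have ha0 : 0 ≤ a := ge_of_tendsto' ha hF0
  refine deriv_condition hr ha0 fun y => ?_
  have key : ∀ n, bil lam (F n) (G n) + (y - F n i) * hlsConv lam (G n) i ≤
      K * (1 + |y| ^ r - F n i ^ r) ^ (1 / r) := by
    intro n
    have hs1 : HasSum (fun j => |Function.update (F n) i y j| ^ r)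
        (|y| ^ r - |F n i| ^ r + powSum r (F n)) := by
      have e : (fun j => |Function.update (F n) i y j| ^ r) =
          Function.update (fun j => |F n j| ^ r) i (|y| ^ r) := by
        ext j
        rcases eq_or_ne j i with rfl | hj <;> simp [*]
      rw [e]
      exact (Summable.hasSum (hF n)).update i (|y| ^ r)
    have hs2 : HasSum (fun j => Function.update (F n) i y j * hlsConv lam (G n) j)
        (y * hlsConv lam (G n) i - F n i * hlsConv lam (G n) i + bil lam (F n) (G n)) := by
      have e : (fun j => Function.update (F n) i y j * hlsConv lam (G n) j) =
          Function.update (fun j => F n j * hlsConv lam (G n) j) i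
            (y * hlsConv lam (G n) i) := by
        ext j
        rcases eq_or_ne j i with rfl | hj <;> simp [*]
      rw [e]
      exact (h.hasSum_bil (hF n) (hG n)).update i (y * hlsConv lam (G n) i)
    have h1 := hle n _ hs1.summable
    rw [(h.hasSum_bil hs1.summable (hG n)).unique hs2, lpNorm_eq, powSum, hs1.tsum_eq, hF1,
      abs_of_nonneg (hF0 n)] at h1
    rw [show 1 + |y| ^ r - F n i ^ r = |y| ^ r - F n i ^ r + 1 by ring]
    linarith
  refine le_of_tendsto_of_tendsto' (hB.add ((tendsto_const_nhds.sub ha).mul hc))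
    (Tendsto.const_mul K (Tendsto.rpow_const (tendsto_const_nhds.sub
      (ha.rpow_const (Or.inr (by linarith)))) (Or.inr (by positivity)))) key

theorem exists_solution (h : Params N r s t lam) :
    ∃ f g : ZN N → ℝ, Memlp r f ∧ Memlp s g ∧
      (∀ i, 0 < f i) ∧ (∀ i, 0 < g i) ∧
      lpNorm r f = 1 ∧ lpNorm s g = 1 ∧
      (∀ i, sSup h.ratioSet * f i ^ (r - 1) = hlsConv lam g i) ∧
      (∀ i, sSup h.ratioSet * g i ^ (s - 1) = hlsConv lam f i) := by
  have hr := h.hr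
  have hs := h.hs
  have hK := h.sSup_pos
  obtain ⟨m, hm, hmax⟩ := h.exists_max_pair
  have hble := fun f g => h.bil_le (f := f) (g := g)
  set K := sSup h.ratioSet
  obtain ⟨c, -, hcI, hcK⟩ := exists_seq_strictMono_tendsto' (show K / 2 < K by linarith)
  choose F G hF hG hF0 hG0 hF1 hG1 hm0 hcB using fun n => hmax (c n) (hcI n).2 (hcI n).1
  have hF1n : ∀ n, lpNorm r (F n) = 1 := fun n => (lpNorm_eq_one_iff (by linarith) _).2 (hF1 n)
  have hG1n : ∀ n, lpNorm s (G n) = 1 := fun n => (lpNorm_eq_one_iff (by linarith) _).2 (hG1 n)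
  have hBK : Tendsto (fun n => bil lam (F n) (G n)) atTop (𝓝 K) := by
    refine tendsto_of_tendsto_of_tendsto_of_le_of_le hcK tendsto_const_nhds hcB fun n => ?_
    have := hble _ _ (hF n) (hG n)
    rwa [hF1n, hG1n, mul_one, mul_one] at this
  -- a pointwise convergent subsequence, by compactness of `[0,1]^(ℤ^N)`
  have hcomp : IsCompact (Set.pi Set.univ fun _ : ZN N => Set.Icc (0 : ℝ) 1) :=
    isCompact_univ_pi fun _ => isCompact_Icc
  obtain ⟨⟨f, g⟩, -, φ, hφ, hlim⟩ := (hcomp.prod hcomp).tendsto_subseq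
    (x := fun n => (F n, G n)) fun n =>
    ⟨fun i _ => ⟨hF0 n i, (le_abs_self _).trans
        (abs_le_one (by linarith) (hF n) (hF1 n).le i)⟩,
      fun i _ => ⟨hG0 n i, (le_abs_self _).trans
        (abs_le_one (by linarith) (hG n) (hG1 n).le i)⟩⟩
  have hlimf : ∀ i, Tendsto (fun n => F (φ n) i) atTop (𝓝 (f i)) :=
    tendsto_pi_nhds.1 ((continuous_fst.tendsto _).comp hlim)
  have hlimg : ∀ i, Tendsto (fun n => G (φ n) i) atTop (𝓝 (g i)) :=
    tendsto_pi_nhds.1 ((continuous_snd.tendsto _).comp hlim)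
  have hB := hBK.comp hφ.tendsto_atTop
  obtain ⟨hf, hfle⟩ := memlp_of_tendsto (by linarith) (fun n => hF (φ n))
    (fun n => (hF1 (φ n)).le) hlimf
  obtain ⟨hg, hgle⟩ := memlp_of_tendsto (by linarith) (fun n => hG (φ n))
    (fun n => (hG1 (φ n)).le) hlimg
  have hf0 : ∀ i, 0 ≤ f i := fun i => ge_of_tendsto' (hlimf i) fun n => hF0 _ i
  have hg0 : ∀ i, 0 ≤ g i := fun i => ge_of_tendsto' (hlimg i) fun n => hG0 _ i
  have hfm : 0 < f 0 := hm.trans_le (ge_of_tendsto' (hlimf 0) fun n => hm0 _)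
  have E1 : ∀ i, K * f i ^ (r - 1) = hlsConv lam g i := fun i =>
    h.limit_equation (fun n => hF (φ n)) (fun n => hG (φ n)) (fun n => hF0 _ i)
      (fun n => hF1 _) (fun n v hv => by
        have := hble v _ hv (hG (φ n))
        rwa [hG1n, mul_one] at this) hB (hlimf i)
      (h.tendsto_conv (fun n => hG (φ n)) (fun n => (hG1 _).le) hg hgle hlimg i)
  have E2 : ∀ i, K * g i ^ (s - 1) = hlsConv lam f i := fun i =>
    h.swap.limit_equation (fun n => hG (φ n)) (fun n => hF (φ n)) (fun n => hG0 _ i)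
      (fun n => hG1 _) (fun n v hv => by
        have := hble _ v (hF (φ n)) hv
        rwa [hF1n, mul_one, bil_comm] at this)
      (hB.congr fun n => bil_comm _ _ _) (hlimg i)
      (h.swap.tendsto_conv (fun n => hF (φ n)) (fun n => (hF1 _).le) hf hfle hlimf i)
  have mul_rpow_self : ∀ x p : ℝ, 0 ≤ x → 1 < p → x * (K * x ^ (p - 1)) = K * |x| ^ p := by
    intro x p hx hp
    rw [abs_of_nonneg hx]
    rcases hx.eq_or_lt with h0 | h0
    · rw [← h0, Real.zero_rpow (show p ≠ 0 by linarith)]; simp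
    · conv_rhs => rw [show p = p - 1 + 1 by ring, Real.rpow_add_one h0.ne']
      ring
  -- testing the two equations against `f` and `g`
  have B1 : bil lam f g = K * powSum r f := by
    refine (h.hasSum_bil hf hg).unique ?_
    simp only [← E1, mul_rpow_self _ _ (hf0 _) hr]
    exact (Summable.hasSum hf).mul_left K
  have B2 : bil lam f g = K * powSum s g := by
    refine (h.hasSum_bil' hf hg).unique ?_
    simp only [← E2, mul_rpow_self _ _ (hg0 _) hs]
    exact (Summable.hasSum hg).mul_left K
  have hab : powSum s g = powSum r f := mul_left_cancel₀ hK.ne' (B2.symm.trans B1)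
  have ha0 : 0 < powSum r f :=
    (Real.rpow_pos_of_pos (abs_pos.2 hfm.ne') r).trans_le (rpow_le_powSum hf 0)
  -- with `a` the common power sum, `a ≤ a ^ (1/r + 1/s)` and `1/r + 1/s > 1` force `a ≥ 1`
  have ha1 : powSum r f = 1 := by
    refine le_antisymm hfle (le_of_not_gt fun hlt => ?_)
    have h1 := hble f g hf hg
    rw [B1, lpNorm_eq, lpNorm_eq, hab, mul_assoc, ← Real.rpow_add ha0] at h1
    have h2 := le_of_mul_le_mul_left h1 hK
    have hN : (0 : ℝ) < N := by exact_mod_cast h.N_pos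
    have h3 : lam / N < 1 := by rw [div_lt_one hN]; exact h.hlamN
    have h4 := Real.rpow_lt_rpow_of_exponent_gt ha0 hlt
      (show 1 < 1 / r + 1 / s by linarith [h.hsup])
    rw [Real.rpow_one] at h4
    linarith
  have pos_of : ∀ x p c : ℝ, 0 ≤ x → 1 < p → 0 < c → K * x ^ (p - 1) = c → 0 < x := by
    intro x p c hx hp hc he
    refine hx.lt_of_ne fun h0 => ?_
    rw [← h0, Real.zero_rpow (by linarith), mul_zero] at he
    linarith
  -- positivity spreads from the origin through the equations
  have stepg : ∀ {i j}, j ≠ i → 0 < f j → 0 < g i := fun {i j} hij hj =>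
    pos_of _ _ _ (hg0 i) hs (h.swap.conv_pos hf hf0 hij hj) (E2 i)
  have stepf : ∀ {i j}, j ≠ i → 0 < g j → 0 < f i := fun {i j} hij hj =>
    pos_of _ _ _ (hf0 i) hr (h.conv_pos hg hg0 hij hj) (E1 i)
  have two_ne : (1 + 1 : ZN N) ≠ 0 := by
    intro e
    have := congrFun e ⟨0, h.N_pos⟩
    simp at this
  have hgi : ∀ i, 0 < g i := by
    intro i
    rcases eq_or_ne i 0 with rfl | hi
    · have h1 : (1 : ZN N) ≠ 0 := by simpa using h.add_one_ne 0
      exact stepg two_ne (stepf (h.add_one_ne 1).symm (stepg h1.symm hfm))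
    · exact stepg hi.symm hfm
  have hfi : ∀ i, 0 < f i := fun i => stepf (h.add_one_ne i) (hgi _)
  exact ⟨f, g, hf, hg, hfi, hgi, (lpNorm_eq_one_iff (by linarith) _).2 ha1,
    (lpNorm_eq_one_iff (by linarith) _).2 (hab.trans ha1), E1, E2⟩

end Params

/-- existence of a positive solution pair of the Euler–Lagrange system
for the supercritical discrete HLS inequality on `ℤ^N`. -/
theorem stmt5 (N : ℕ) (r s t lam : ℝ) (hr : 1 < r) (hs : 1 < s)
    (hlam0 : 0 < lam) (hlamN : lam < (N : ℝ))
    (hsup : 1 / r + 1 / s + lam / (N : ℝ) > 2)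
    (ht1 : 1 < t) (hts : 1 / t + 1 / s = 1)
    (K : ℝ)
    (hK : K = sSup {c : ℝ | ∃ f : ZN N → ℝ, Memlp r f ∧ lpNorm r f = 1 ∧
        c = lpNorm t (hlsConv lam f)}) :
    ∃ f g : ZN N → ℝ, Memlp r f ∧ Memlp s g ∧
      (∀ i, 0 < f i) ∧ (∀ i, 0 < g i) ∧
      lpNorm r f = 1 ∧ lpNorm s g = 1 ∧
      (∀ i, K * f i ^ (r - 1) = hlsConv lam g i) ∧
      (∀ i, K * g i ^ (s - 1) = hlsConv lam f i) := by
  have h : Params N r s t lam := ⟨hr, hs, hlam0, hlamN, hsup, ht1, hts⟩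
  rw [hK]
  exact h.exists_solution
end
end

section
/- Let G = (V, E) be a locally finite simple graph and let a > 1. If u : V → ℝ is a non-negative solution of −Δu = u^a on V, where Δ is the normalized Laplacian, then u(x) ≤ 1 for all x ∈ V. -/
open Finset

noncomputable section

/-- on a locally finite graph, any non-negative solution of
`-Δu = u^a` (`a > 1`, normalized Laplacian `Δ`) satisfies `u ≤ 1`. -/
theorem stmt6 (V : Type*) (G : SimpleGraph V) [∀ x : V, Fintype (G.neighborSet x)]
    (hdeg : ∀ x : V, 0 < G.degree x) (a : ℝ) (ha : 1 < a)
    (u : V → ℝ) (hnn : ∀ x, 0 ≤ u x)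
    (heq : ∀ x : V, -((G.degree x : ℝ)⁻¹ * ∑ y ∈ G.neighborFinset x, (u y - u x))
        = u x ^ a) :
    ∀ x, u x ≤ 1 := by
  intro x
  have hd : (0 : ℝ) < G.degree x := by exact_mod_cast hdeg x
  have hsum : 0 ≤ ∑ y ∈ G.neighborFinset x, u y := Finset.sum_nonneg fun y _ => hnn y
  -- Discarding the non-negative neighbour average from `-Δu = u ^ a` leaves `u ^ a ≤ u`.
  have hle : u x ^ a ≤ u x := by
    rw [← heq x, Finset.sum_sub_distrib, Finset.sum_const, SimpleGraph.card_neighborFinset_eq_degree,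
      nsmul_eq_mul, mul_sub, inv_mul_cancel_left₀ hd.ne']
    have := mul_nonneg (inv_nonneg.mpr hd.le) hsum
    linarith
  by_contra! h
  exact absurd hle (not_le.mpr (Real.self_lt_rpow_of_one_lt h ha))
end
end

section
/- Let Ω ⊂ ℤ^N, 1 ≤ p < ∞, and let {u_n} be a sequence of functions on ℤ^N with sup_n ‖u_n‖_{D^{1,p}} < ∞ that converges pointwise on ℤ^N to a function u. Then lim_{n→∞} ( Σ_{i∈Ω} |∇u_n(i)|_p^p − Σ_{i∈Ω} |∇(u_n − u)(i)|_p^p ) = Σ_{i∈Ω} |∇u(i)|_p^p. -/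
/-!
The sums over `Ω` are sums over the oriented edges `x → y` with `x ∈ Ω`, so the claim is the
Brézis–Lieb lemma for the counting measure on the set of these edges, applied to the differences
`a n e = u n y - u n x`, which converge pointwise to `b e = v y - v x`.

For the Brézis–Lieb lemma, convexity of `t ↦ t ^ p` gives, for every `ε > 0`, a constant `K` with
`|s + t| ^ p ≤ (1 + ε) |s| ^ p + K |t| ^ p`. Hence the defect
`W n = | |a n| ^ p - |a n - b| ^ p - |b| ^ p |` is at most `ε M n + (K + 1) |b| ^ p`, where
`M n = |a n| ^ p + |a n - b| ^ p` has sum bounded independently of `n` and `ε`. The function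
`max (W n - ε M n) 0` is therefore dominated by a summable function and tends to `0` pointwise,
so its sum tends to `0`, and `∑ W n` is eventually at most a fixed multiple of `ε`.
-/

open Filter Topology

noncomputable section

lemma abs_add_rpow_le {p : ℝ} (hp : 1 ≤ p) {ε : ℝ} (hε : 0 < ε) :
    ∃ K : ℝ, 0 ≤ K ∧ ∀ s t : ℝ, |s + t| ^ p ≤ (1 + ε) * |s| ^ p + K * |t| ^ p := by
  have hc : Tendsto (fun l : ℝ => (1 - l) * ((1 - l)⁻¹) ^ p) (𝓝[>] 0) (𝓝 1) := by
    have h : ContinuousAt (fun l : ℝ => (1 - l) * ((1 - l)⁻¹) ^ p) 0 := by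
      have h1 : ContinuousAt (fun l : ℝ => (1 - l)) 0 := by fun_prop
      exact h1.mul ((h1.inv₀ (by norm_num)).rpow_const (Or.inl (by norm_num)))
    have h2 := h.tendsto
    simp only [sub_zero, inv_one, Real.one_rpow, mul_one] at h2
    exact h2.mono_left nhdsWithin_le_nhds
  have h1 : ∀ᶠ l : ℝ in 𝓝[>] 0, (1 - l) * ((1 - l)⁻¹) ^ p < 1 + ε :=
    hc.eventually (gt_mem_nhds (by linarith))
  have h2 : ∀ᶠ l : ℝ in 𝓝[>] 0, l ∈ Set.Ioo (0 : ℝ) 1 := Ioo_mem_nhdsGT one_pos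
  obtain ⟨l, hl, hl0, hl1⟩ := (h1.and h2).exists
  have hm : 0 < 1 - l := by linarith
  refine ⟨l * (l⁻¹) ^ p, by positivity, fun s t => ?_⟩
  have key := (convexOn_rpow hp).2 (x := (1 - l)⁻¹ * |s|) (y := l⁻¹ * |t|)
    (Set.mem_Ici.2 (by positivity)) (Set.mem_Ici.2 (by positivity)) hm.le hl0.le (by ring)
  simp only [smul_eq_mul] at key
  rw [mul_inv_cancel_left₀ hm.ne', mul_inv_cancel_left₀ hl0.ne',
    Real.mul_rpow (by positivity) (abs_nonneg s), Real.mul_rpow (by positivity) (abs_nonneg t),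
    ← mul_assoc, ← mul_assoc] at key
  calc |s + t| ^ p ≤ (|s| + |t|) ^ p :=
        Real.rpow_le_rpow (abs_nonneg _) (abs_add_le s t) (by linarith)
    _ ≤ _ := key
    _ ≤ _ := by gcongr

/-- The Brézis–Lieb lemma for the counting measure on `ι`. -/
lemma brezis_lieb_tsum {ι : Type*} {p : ℝ} (hp : 1 ≤ p) (a : ℕ → ι → ℝ) (b : ι → ℝ) (C : ℝ)
    (hs : ∀ n, Summable fun e => |a n e| ^ p) (hC : ∀ n, ∑' e, |a n e| ^ p ≤ C)
    (hab : ∀ e, Tendsto (fun n => a n e) atTop (𝓝 (b e))) :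
    (Summable fun e => |b e| ^ p) ∧ (∀ n, Summable fun e => |a n e - b e| ^ p) ∧
    Tendsto (fun n => ∑' e, |a n e| ^ p - ∑' e, |a n e - b e| ^ p) atTop
      (𝓝 (∑' e, |b e| ^ p)) := by
  have hp0 : 0 < p := by linarith
  have hnn : ∀ x : ℝ, 0 ≤ |x| ^ p := fun x => by positivity
  have hcont : Continuous fun x : ℝ => |x| ^ p :=
    continuous_abs.rpow_const fun _ => Or.inr hp0.le
  have hla : ∀ e, Tendsto (fun n => |a n e| ^ p) atTop (𝓝 (|b e| ^ p)) := fun e =>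
    (hcont.tendsto _).comp (hab e)
  have hld : ∀ e, Tendsto (fun n => |a n e - b e| ^ p) atTop (𝓝 0) := fun e => by
    have h := (hcont.tendsto _).comp ((hab e).sub_const (b e))
    simpa [Function.comp_def, Real.zero_rpow hp0.ne'] using h
  have hb : Summable fun e => |b e| ^ p := by
    refine summable_of_sum_le (c := C) (fun e => hnn _) fun F => ?_
    exact le_of_tendsto (tendsto_finsetSum F fun e _ => hla e)
      (Eventually.of_forall fun n => ((hs n).sum_le_tsum F fun _ _ => hnn _).trans (hC n))
  obtain ⟨K₁, hK₁, hK₁'⟩ := abs_add_rpow_le hp one_pos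
  have hd1 : ∀ n e, |a n e - b e| ^ p ≤ (1 + 1) * |a n e| ^ p + K₁ * |b e| ^ p := fun n e => by
    simpa [sub_eq_add_neg] using hK₁' (a n e) (-b e)
  have hmaj : ∀ n, Summable fun e => (1 + 1) * |a n e| ^ p + K₁ * |b e| ^ p := fun n =>
    ((hs n).mul_left _).add (hb.mul_left _)
  have hd : ∀ n, Summable fun e => |a n e - b e| ^ p := fun n =>
    Summable.of_nonneg_of_le (fun e => hnn _) (hd1 n) (hmaj n)
  refine ⟨hb, hd, ?_⟩
  set B := ∑' e, |b e| ^ p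
  have hM : ∀ n, Summable fun e => |a n e| ^ p + |a n e - b e| ^ p := fun n => (hs n).add (hd n)
  have hMle : ∀ n, ∑' e, (|a n e| ^ p + |a n e - b e| ^ p) ≤ 3 * C + K₁ * B := fun n => by
    have h1 := (hd n).tsum_le_tsum (hd1 n) (hmaj n)
    rw [((hs n).mul_left _).tsum_add (hb.mul_left _), tsum_mul_left, tsum_mul_left] at h1
    rw [(hs n).tsum_add (hd n)]
    linarith [hC n]
  have hD0 : 0 ≤ 3 * C + K₁ * B :=
    (tsum_nonneg fun e => add_nonneg (hnn _) (hnn _)).trans (hMle 0)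
  set D := 3 * C + K₁ * B
  rw [Metric.tendsto_atTop]
  intro δ hδ
  -- This choice makes `ε * D < δ / 2`, also when `D = 0`.
  set ε := δ / (2 * (D + 1)) with hεdef
  have hε : 0 < ε := by positivity
  have hεD : ε * D < δ / 2 := by
    rw [hεdef, div_mul_eq_mul_div, div_lt_div_iff₀ (by positivity) (by positivity)]
    nlinarith
  obtain ⟨K, hK, hK'⟩ := abs_add_rpow_le hp hε
  let W : ℕ → ι → ℝ := fun n e => |a n e| ^ p - |a n e - b e| ^ p - |b e| ^ p
  let M : ℕ → ι → ℝ := fun n e => |a n e| ^ p + |a n e - b e| ^ p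
  have hM0 : ∀ n e, 0 ≤ M n e := fun n e => add_nonneg (hnn _) (hnn _)
  have hW : ∀ n, Summable (W n) := fun n => ((hs n).sub (hd n)).sub hb
  have hWle : ∀ n e, |W n e| - ε * M n e ≤ (K + 1) * |b e| ^ p := fun n e => by
    have h1 := hK' (a n e - b e) (b e)
    have h2 := hK' (a n e) (-b e)
    rw [sub_add_cancel] at h1
    rw [abs_neg, ← sub_eq_add_neg] at h2
    have h3 := hnn (a n e)
    have h4 := hnn (a n e - b e)
    have h5 := hnn (b e)
    have h6 := mul_nonneg hε.le h3
    have h7 := mul_nonneg hε.le h4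
    have h8 : |W n e| ≤ ε * M n e + (K + 1) * |b e| ^ p := by
      simp only [W, M]
      rw [abs_le]
      constructor <;> nlinarith
    linarith
  have hbound : ∀ n e, ‖max (|W n e| - ε * M n e) 0‖ ≤ (K + 1) * |b e| ^ p := fun n e => by
    rw [Real.norm_of_nonneg (le_max_right _ _)]
    exact max_le (hWle n e) (mul_nonneg (by linarith) (hnn _))
  have hlim : Tendsto (fun n => ∑' e, max (|W n e| - ε * M n e) 0) atTop (𝓝 (∑' _ : ι, (0 : ℝ))) := by
    refine tendsto_tsum_of_dominated_convergence (hb.mul_left (K + 1)) (fun e => ?_)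
      (Eventually.of_forall fun n e => hbound n e)
    have hWl : Tendsto (fun n => |W n e|) atTop (𝓝 0) := by
      simpa using (((hla e).sub (hld e)).sub_const (|b e| ^ p)).abs
    refine squeeze_zero (fun n => le_max_right _ _) (fun n => ?_) hWl
    exact max_le (by linarith [mul_nonneg hε.le (hM0 n e)]) (abs_nonneg _)
  rw [tsum_zero] at hlim
  obtain ⟨n₀, hn₀⟩ := eventually_atTop.1 (hlim.eventually (gt_mem_nhds (half_pos hδ)))
  refine ⟨n₀, fun n hn => ?_⟩
  have hX : Summable fun e => max (|W n e| - ε * M n e) 0 :=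
    Summable.of_norm_bounded (hb.mul_left (K + 1)) (hbound n)
  have hWt : ∑' e, W n e = ∑' e, |a n e| ^ p - ∑' e, |a n e - b e| ^ p - B := by
    rw [((hs n).sub (hd n)).tsum_sub hb, (hs n).tsum_sub (hd n)]
  rw [Real.dist_eq, ← hWt]
  calc |∑' e, W n e| ≤ ∑' e, |W n e| := by
        simpa only [Real.norm_eq_abs] using norm_tsum_le_tsum_norm (hW n).norm
    _ ≤ ∑' e, (max (|W n e| - ε * M n e) 0 + ε * M n e) :=
        (hW n).abs.tsum_le_tsum (fun e => by linarith [le_max_left (|W n e| - ε * M n e) 0])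
          (hX.add ((hM n).mul_left ε))
    _ = ∑' e, max (|W n e| - ε * M n e) 0 + ε * ∑' e, M n e := by
        rw [hX.tsum_add ((hM n).mul_left ε), tsum_mul_left]
    _ < δ := by
        have h1 := hn₀ n hn
        have h2 := mul_le_mul_of_nonneg_left (hMle n) hε.le
        linarith

instance finite_neighbors {N : ℕ} (x : ZN N) : Finite {y : ZN N // adj x y} := by
  refine Set.Finite.to_subtype (s := {y : ZN N | adj x y}) ?_
  refine (Set.finite_Icc (fun k => x k - 1) (fun k => x k + 1)).subset fun y hy => ?_
  have h : ∀ k, |x k - y k| ≤ 1 := fun k => by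
    have h1 := Finset.single_le_sum (f := fun k => |x k - y k|) (fun _ _ => abs_nonneg _)
      (Finset.mem_univ k)
    exact h1.trans hy.le
  exact ⟨fun k => by have := abs_le.1 (h k); dsimp only; linarith,
    fun k => by have := abs_le.1 (h k); dsimp only; linarith⟩

lemma gradPow_nonneg {N : ℕ} (p : ℝ) (u : ZN N → ℝ) (x : ZN N) : 0 ≤ gradPow p u x :=
  tsum_nonneg fun _ => by positivity

/-- The oriented edges of the lattice graph whose origin lies in `Ω`. -/
abbrev EdgeFrom {N : ℕ} (Ω : Set (ZN N)) := Σ x : Ω, {y : ZN N // adj x.1 y}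

lemma summable_edgeFrom_iff {N : ℕ} (p : ℝ) (Ω : Set (ZN N)) (w : ZN N → ℝ) :
    (Summable fun e : EdgeFrom Ω => |w e.2.1 - w e.1.1| ^ p) ↔
      Summable fun i : Ω => gradPow p w i.1 := by
  rw [summable_sigma_of_nonneg fun e => by positivity]
  exact ⟨fun h => h.2, fun h => ⟨fun _ => Summable.of_finite, h⟩⟩

lemma tsum_edgeFrom {N : ℕ} (p : ℝ) (Ω : Set (ZN N)) (w : ZN N → ℝ)
    (h : Summable fun e : EdgeFrom Ω => |w e.2.1 - w e.1.1| ^ p) :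
    ∑' e : EdgeFrom Ω, |w e.2.1 - w e.1.1| ^ p = ∑' i : Ω, gradPow p w i.1 :=
  h.tsum_sigma

/-- the Brézis–Lieb identity for discrete gradients on a subset
`Ω ⊆ ℤ^N`. -/
theorem stmt7 (N : ℕ) (p : ℝ) (hp1 : 1 ≤ p) (Ω : Set (ZN N))
    (u : ℕ → ZN N → ℝ) (v : ZN N → ℝ)
    (hb : ∃ C : ℝ, ∀ n, (Summable fun x => gradPow p (u n) x) ∧ DSumPow p (u n) ≤ C)
    (hpt : ∀ x, Tendsto (fun n => u n x) atTop (𝓝 (v x))) :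
    Tendsto (fun n => (∑' i : Ω, gradPow p (u n) i.1) -
        ∑' i : Ω, gradPow p (fun x => u n x - v x) i.1) atTop
      (𝓝 (∑' i : Ω, gradPow p v i.1)) := by
  obtain ⟨C, hC⟩ := hb
  have hs : ∀ n, Summable fun e : EdgeFrom Ω => |u n e.2.1 - u n e.1.1| ^ p := fun n =>
    (summable_edgeFrom_iff p Ω (u n)).2 ((hC n).1.subtype Ω)
  obtain ⟨hv, hd, hlim⟩ := brezis_lieb_tsum hp1
    (fun n (e : EdgeFrom Ω) => u n e.2.1 - u n e.1.1) (fun e => v e.2.1 - v e.1.1) C hs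
    (fun n => by
      rw [tsum_edgeFrom p Ω (u n) (hs n)]
      exact (Summable.tsum_subtype_le _ Ω (gradPow_nonneg p (u n)) (hC n).1).trans (hC n).2)
    (fun e => (hpt _).sub (hpt _))
  -- The gradient of a difference is the difference of the gradients.
  have hdiff : ∀ n (e : EdgeFrom Ω), u n e.2.1 - u n e.1.1 - (v e.2.1 - v e.1.1) =
      u n e.2.1 - v e.2.1 - (u n e.1.1 - v e.1.1) := fun n e => sub_sub_sub_comm _ _ _ _
  simp only [hdiff] at hd hlim
  rw [tsum_edgeFrom p Ω v hv] at hlim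
  refine hlim.congr fun n => ?_
  rw [tsum_edgeFrom p Ω (u n) (hs n), tsum_edgeFrom p Ω (fun x => u n x - v x) (hd n)]
end
end
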